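/- Let A be a ring-indecomposable finite-dimensional algebra over a field k (its only central idempotents are 0 and 1). If every finitely generated module over the trivial extension algebra T(A) has complexity at most one, then A has finite global dimension. -/

import Mathlib

open TensorProduct

/-- The dimension over `k` of a module over the `k`-algebra `B`. -/
noncomputable def kDim (k B : Type) [Field k] [Ring B] [Algebra k B]
    (M : Type) [AddCommGroup M] [Module B M] : ℕ :=
  letI : Module k M := Module.compHom M (algebraMap k B)
  Module.finrank k M

/-- A `B`-module `M` has complexity at most one: there are a constant `C` and a projective
resolution `⋯ → P_1 → P_0 → M → 0` by finitely generated projective `B`-modules with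
`dim_k P_t ≤ C` for all `t`. -/
noncomputable def ComplexityLeOne (k B : Type) [Field k] [Ring B] [Algebra k B]
    (M : Type) [AddCommGroup M] [Module B M] : Prop :=
  ∃ (C : ℕ) (P : ℕ → ModuleCat B) (f : ∀ i, P (i + 1) →ₗ[B] P i) (π : (P 0 : Type) →ₗ[B] M),
    (∀ i, Module.Projective B (P i)) ∧ (∀ i, Module.Finite B (P i)) ∧
    (∀ i, kDim k B (P i) ≤ C) ∧
    Function.Surjective π ∧ LinearMap.range (f 0) = LinearMap.ker π ∧
    ∀ i, LinearMap.range (f (i + 1)) = LinearMap.ker (f i)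

/-- The `R`-module `M` has projective dimension at most `d`: there is a projective
resolution `⋯ → P_1 → P_0 → M → 0` which vanishes in degrees `> d`. -/
def ProjDimLE (R : Type) [Ring R] (M : Type) [AddCommGroup M] [Module R M] (d : ℕ) : Prop :=
  ∃ (P : ℕ → ModuleCat R) (f : ∀ i, P (i + 1) →ₗ[R] P i) (π : (P 0 : Type) →ₗ[R] M),
    (∀ i, Module.Projective R (P i)) ∧ Function.Surjective π ∧
    LinearMap.range (f 0) = LinearMap.ker π ∧
    (∀ i, LinearMap.range (f (i + 1)) = LinearMap.ker (f i)) ∧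
    ∀ i, d < i → Subsingleton (P i)

/-- The ring `R` has finite global dimension: there is a `d` such that every `R`-module has
projective dimension at most `d`. -/
def HasFiniteGlobalDimension (R : Type) [Ring R] : Prop :=
  ∃ d : ℕ, ∀ (M : Type) [AddCommGroup M] [Module R M], ProjDimLE R M d

section DualBimodule

variable (k A : Type) [Field k] [Ring A] [Algebra k A]

/-- The left `A`-action on `D(A) = Hom_k(A, k)`, given by `(a • f) x = f (x * a)`. -/
noncomputable instance Module.Dual.leftModule : Module A (Module.Dual k A) where
  smul a f := f ∘ₗ LinearMap.mulRight k a
  one_smul f := LinearMap.ext fun x => by show f (x * 1) = f x; rw [mul_one]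
  mul_smul a b f := LinearMap.ext fun x => by
    show f (x * (a * b)) = f (x * a * b); rw [mul_assoc]
  smul_zero a := LinearMap.ext fun x => by show (0 : Module.Dual k A) (x * a) = 0; rfl
  smul_add a f g := LinearMap.ext fun x => by
    show (f + g) (x * a) = f (x * a) + g (x * a); rfl
  add_smul a b f := LinearMap.ext fun x => by
    show f (x * (a + b)) = f (x * a) + f (x * b); rw [mul_add, map_add]
  zero_smul f := LinearMap.ext fun x => by show f (x * 0) = 0; rw [mul_zero, map_zero]

/-- The right `A`-action on `D(A) = Hom_k(A, k)`, given by `(f • op b) x = f (b * x)`. -/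
noncomputable instance Module.Dual.rightModule : Module Aᵐᵒᵖ (Module.Dual k A) where
  smul b f := f ∘ₗ LinearMap.mulLeft k b.unop
  one_smul f := LinearMap.ext fun x => by show f (1 * x) = f x; rw [one_mul]
  mul_smul a b f := LinearMap.ext fun x => by
    show f ((a * b).unop * x) = f (b.unop * (a.unop * x))
    rw [MulOpposite.unop_mul, mul_assoc]
  smul_zero a := LinearMap.ext fun x => by show (0 : Module.Dual k A) (a.unop * x) = 0; rfl
  smul_add a f g := LinearMap.ext fun x => by
    show (f + g) (a.unop * x) = f (a.unop * x) + g (a.unop * x); rfl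
  add_smul a b f := LinearMap.ext fun x => by
    show f ((a + b).unop * x) = f (a.unop * x) + f (b.unop * x)
    rw [MulOpposite.unop_add, add_mul, map_add]
  zero_smul f := LinearMap.ext fun x => by
    show f ((0 : Aᵐᵒᵖ).unop * x) = 0
    rw [MulOpposite.unop_zero, zero_mul, map_zero]

instance : SMulCommClass A Aᵐᵒᵖ (Module.Dual k A) where
  smul_comm a b f := LinearMap.ext fun x => by
    show f (b.unop * (x * a)) = f (b.unop * x * a); rw [mul_assoc]

instance : IsScalarTower k A (Module.Dual k A) where
  smul_assoc c a f := LinearMap.ext fun x => by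
    show f (x * (c • a)) = c • f (x * a)
    rw [mul_smul_comm, map_smul]

instance : IsScalarTower k Aᵐᵒᵖ (Module.Dual k A) where
  smul_assoc c b f := LinearMap.ext fun x => by
    show f ((c • b).unop * x) = c • f (b.unop * x)
    rw [MulOpposite.unop_smul, smul_mul_assoc, map_smul]

/-- The trivial extension algebra `T(A) = A ⊕ D(A)`. -/
noncomputable abbrev TrivialExtension : Type := TrivSqZeroExt A (Module.Dual k A)

end DualBimodule

set_option linter.unusedSectionVars false

section
open CategoryTheory

def PD (R : Type) [Ring R] (M : Type) [AddCommGroup M] [Module R M] (n : ℕ) : Prop :=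
  HasProjectiveDimensionLT (ModuleCat.of R M) n

section PD
variable {R : Type} [Ring R] {M N L : Type} [AddCommGroup M] [Module R M] [AddCommGroup N]
  [Module R N] [AddCommGroup L] [Module R L]

theorem PD.ses (f : M →ₗ[R] N) (g : N →ₗ[R] L) (hf : Function.Injective f)
    (hg : Function.Surjective g) (he : LinearMap.range f = LinearMap.ker g) :
    (ShortComplex.mk (ModuleCat.ofHom f) (ModuleCat.ofHom g)
      (by ext x; exact (SetLike.ext_iff.1 he (f x)).1 ⟨x, rfl⟩)).ShortExact := by
  refine ShortComplex.ShortExact.mk' ?_ ?_ ?_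
  · rw [ShortComplex.moduleCat_exact_iff]
    intro x hx
    exact (SetLike.ext_iff.1 he x).2 hx
  · exact (ModuleCat.mono_iff_injective _).2 hf
  · exact (ModuleCat.epi_iff_surjective _).2 hg

theorem PD.x2 (f : M →ₗ[R] N) (g : N →ₗ[R] L) (hf : Function.Injective f)
    (hg : Function.Surjective g) (he : LinearMap.range f = LinearMap.ker g) {n : ℕ}
    (h1 : PD R M n) (h3 : PD R L n) : PD R N n :=
  (PD.ses f g hf hg he).hasProjectiveDimensionLT_X₂ n h1 h3

theorem PD.x3 (f : M →ₗ[R] N) (g : N →ₗ[R] L) (hf : Function.Injective f)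
    (hg : Function.Surjective g) (he : LinearMap.range f = LinearMap.ker g) {n : ℕ}
    (h1 : PD R M n) (h3 : PD R N (n+1)) : PD R L (n+1) :=
  (PD.ses f g hf hg he).hasProjectiveDimensionLT_X₃ n h1 h3

theorem PD.x1 (f : M →ₗ[R] N) (g : N →ₗ[R] L) (hf : Function.Injective f)
    (hg : Function.Surjective g) (he : LinearMap.range f = LinearMap.ker g) {n : ℕ}
    (h1 : PD R N n) (h3 : PD R L (n+1)) : PD R M n :=
  (PD.ses f g hf hg he).hasProjectiveDimensionLT_X₁ n h1 h3

theorem PD.one_iff : PD R M 1 ↔ Module.Projective R M := by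
  rw [PD, ← projective_iff_hasProjectiveDimensionLT_one, ← IsProjective.iff_projective]

theorem PD.zero_iff : PD R M 0 ↔ Subsingleton M := by
  rw [PD, hasProjectiveDimensionLT_zero_iff_isZero, ModuleCat.isZero_iff_subsingleton]

theorem PD.mono {m n : ℕ} (h : m ≤ n) (hm : PD R M m) : PD R M n :=
  have : HasProjectiveDimensionLT (ModuleCat.of R M) m := hm
  hasProjectiveDimensionLT_of_ge _ m n h

theorem PD.retract (i : M →ₗ[R] N) (r : N →ₗ[R] M) (h : ∀ x, r (i x) = x) {n : ℕ}
    (hN : PD R N n) : PD R M n := by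
  have : HasProjectiveDimensionLT (ModuleCat.of R N) n := hN
  exact Retract.hasProjectiveDimensionLT (X := ModuleCat.of R M) (Y := ModuleCat.of R N)
    ⟨ModuleCat.ofHom i, ModuleCat.ofHom r, by ext x; exact h x⟩ n

theorem proj_finsupp (ι : Type) (M : Type) [AddCommGroup M] [Module R M]
    [Module.Projective R M] : Module.Projective R (ι →₀ M) := by
  classical
  exact Module.Projective.of_equiv (finsuppLequivDFinsupp R (ι := ι) (M := M)).symm

theorem PD.finsupp (ι : Type) {n : ℕ} (M : Type) [AddCommGroup M] [Module R M]
    (hM : PD R M n) : PD R (ι →₀ M) n := by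
  induction n generalizing M with
  | zero =>
    rw [PD.zero_iff] at *
    infer_instance
  | succ n ih =>
    rcases Nat.eq_zero_or_pos n with rfl | hn
    · have := PD.one_iff.1 hM
      exact PD.one_iff.2 (proj_finsupp ι M)
    · let g : (M →₀ R) →ₗ[R] M := Finsupp.linearCombination R id
      have hg : Function.Surjective g := Finsupp.linearCombination_id_surjective R M
      have hp : PD R (M →₀ R) 1 := PD.one_iff.2 inferInstance
      have hk : PD R (LinearMap.ker g) n := PD.x1 (LinearMap.ker g).subtype g
        (Submodule.subtype_injective _) hg (by simp) (hp.mono hn) hM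
      refine PD.x3 (N := ι →₀ (M →₀ R)) (Finsupp.mapRange.linearMap (α := ι) (LinearMap.ker g).subtype)
        (Finsupp.mapRange.linearMap (α := ι) g) ?_ ?_ ?_ (ih _ hk) ?_
      · exact Finsupp.mapRange_injective _ (map_zero _) (Submodule.subtype_injective _)
      · exact Finsupp.mapRange_surjective _ (map_zero g) hg
      · rw [Finsupp.ker_mapRange, Finsupp.range_mapRange_linearMap]
        · simp
        · simp
      · exact (PD.one_iff.2 (proj_finsupp ι (M →₀ R))).mono (by omega)
end PD

theorem PD.projDimLE {R : Type} [Ring R] (d : ℕ) (M : Type) [AddCommGroup M] [Module R M]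
    (h : PD R M (d+1)) : ProjDimLE R M d := by
  induction d generalizing M with
  | zero =>
    have hM := PD.one_iff.1 h
    refine ⟨fun i => Nat.casesOn i (ModuleCat.of R M) fun _ => ModuleCat.of R PUnit, fun i => 0,
      LinearMap.id, ?_, fun x => ⟨x, rfl⟩, ?_, ?_, ?_⟩
    · rintro (_ | i)
      · exact hM
      · show Module.Projective R PUnit
        infer_instance
    · simp
    · intro i
      have : Subsingleton (LinearMap.ker (0 : PUnit.{1} →ₗ[R] M)) := inferInstance
      ext x
      constructor
      · intro _; rfl
      · intro _; exact ⟨0, Subsingleton.elim (α := PUnit) _ _⟩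
    · rintro (_ | i) hi
      · omega
      · exact inferInstanceAs (Subsingleton PUnit)
  | succ d ih =>
    let g : (M →₀ R) →ₗ[R] M := Finsupp.linearCombination R id
    have hg : Function.Surjective g := Finsupp.linearCombination_id_surjective R M
    have hp : PD R (M →₀ R) 1 := PD.one_iff.2 inferInstance
    have hk : PD R (LinearMap.ker g) (d+1) := PD.x1 (LinearMap.ker g).subtype g
        (Submodule.subtype_injective _) hg (by simp) (hp.mono (by omega)) h
    obtain ⟨P, f, π, h1, h2, h3, h4, h5⟩ := ih _ hk
    refine ⟨fun i => Nat.casesOn i (ModuleCat.of R (M →₀ R)) P,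
      fun i => Nat.casesOn i ((LinearMap.ker g).subtype ∘ₗ π) f, g, ?_, hg, ?_, ?_, ?_⟩
    · rintro (_ | i)
      · show Module.Projective R (M →₀ R)
        infer_instance
      · exact h1 i
    · show LinearMap.range ((LinearMap.ker g).subtype ∘ₗ π) = _
      rw [LinearMap.range_comp, LinearMap.range_eq_top.2 h2]
      simp
    · rintro (_ | i)
      · show LinearMap.range (f 0) = LinearMap.ker ((LinearMap.ker g).subtype ∘ₗ π)
        rw [LinearMap.ker_comp_of_ker_eq_bot _ (by simp)]
        exact h3
      · exact h4 i
    · rintro (_ | i) hi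
      · omega
      · exact h5 i (by omega)

theorem PD.all_of_jacobson {R : Type} [Ring R] [IsSemiprimaryRing R] {n : ℕ}
    (h : PD R (R ⧸ Ring.jacobson R) n) (M : Type) [AddCommGroup M] [Module R M] : PD R M n := by
  have hss : IsSemisimpleModule R (R ⧸ Ring.jacobson R) := by
    have := (IsSemiprimaryRing.isSemisimpleRing : IsSemisimpleRing (R ⧸ Ring.jacobson R))
    exact ((⟨⟨(id : (R ⧸ Ring.jacobson R) → _), fun _ _ => rfl⟩, fun a b => rfl⟩ :
      (R ⧸ Ring.jacobson R) →ₛₗ[Ideal.Quotient.mk (Ring.jacobson R)] (R ⧸ Ring.jacobson R)).isSemisimpleModule_iff_of_bijective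
        Function.bijective_id).2 this
  refine IsSemiprimaryRing.induction ℤ R M (P := fun M _ _ _ => PD R M n) ?_ ?_
  · intro M _ _ mod _ _ ht
    have key : ∀ m : M, ∃ u : (R ⧸ Ring.jacobson R) →ₗ[R] M, u (Submodule.Quotient.mk 1) = m := by
      intro m
      refine ⟨Submodule.liftQ (Ring.jacobson R) (LinearMap.toSpanSingleton R M m) ?_, ?_⟩
      · intro a ha
        exact @ht m ⟨a, ha⟩
      · exact one_smul R m
    choose u hu using key
    let g : (M →₀ (R ⧸ Ring.jacobson R)) →ₗ[R] M := Finsupp.lsum ℕ u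
    have hg : Function.Surjective g := fun m => ⟨Finsupp.single m (Submodule.Quotient.mk 1), by
      
        show Finsupp.lsum ℕ u _ = m
        rw [Finsupp.lsum_single, hu]⟩
    obtain ⟨s, hs⟩ := IsSemisimpleModule.lifting_property g hg LinearMap.id
    exact PD.retract s g (fun x => LinearMap.congr_fun hs x) (PD.finsupp M _ h)
  · intro M _ _ mod  _ N h1 h2
    exact PD.x2 N.subtype N.mkQ (Submodule.subtype_injective _) (Submodule.mkQ_surjective _)
      (by simp) h1 h2

end

theorem inj_factor {R : Type} [Ring R] {X Y I : Type} [AddCommGroup X] [Module R X]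
    [AddCommGroup Y] [Module R Y] [AddCommGroup I] [Module R I] [Module.Injective R I]
    (f : X →ₗ[R] Y) (w : X →ₗ[R] I) (h : LinearMap.ker f ≤ LinearMap.ker w) :
    ∃ u : Y →ₗ[R] I, ∀ x, u (f x) = w x := by
  obtain ⟨u, hu⟩ := Module.Injective.extension_property R I _ _
    (Submodule.liftQ (LinearMap.ker f) f le_rfl)
    (LinearMap.ker_eq_bot.1 (Submodule.ker_liftQ_eq_bot _ _ _ le_rfl))
    (Submodule.liftQ (LinearMap.ker f) w h)
  refine ⟨u, fun x => ?_⟩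
  have := LinearMap.congr_fun hu (Submodule.Quotient.mk x)
  simpa using this

theorem jac_semisimple (R : Type) [Ring R] [IsSemiprimaryRing R] :
    IsSemisimpleModule R (R ⧸ Ring.jacobson R) := by
  have := (IsSemiprimaryRing.isSemisimpleRing : IsSemisimpleRing (R ⧸ Ring.jacobson R))
  exact ((⟨⟨(id : (R ⧸ Ring.jacobson R) → _), fun _ _ => rfl⟩, fun a b => rfl⟩ :
      (R ⧸ Ring.jacobson R) →ₛₗ[Ideal.Quotient.mk (Ring.jacobson R)]
        (R ⧸ Ring.jacobson R)).isSemisimpleModule_iff_of_bijective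
        Function.bijective_id).2 this

theorem baer_of_jacobson_le {R : Type} [Ring R] [IsSemiprimaryRing R] {N : Type} [AddCommGroup N]
    [Module R N] (h : ∀ g : (Ring.jacobson R : Ideal R) →ₗ[R] N, ∃ u : R →ₗ[R] N,
      ∀ a (ha : a ∈ Ring.jacobson R), u a = g ⟨a, ha⟩)
    (I : Ideal R) (hI : Ring.jacobson R ≤ I) (φ : I →ₗ[R] N) :
    ∃ u : R →ₗ[R] N, ∀ a (ha : a ∈ I), u a = φ ⟨a, ha⟩ := by
  have := jac_semisimple R
  obtain ⟨u, hu⟩ := h (φ ∘ₗ Submodule.inclusion hI)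
  let w : I →ₗ[R] N := φ - u ∘ₗ I.subtype
  let J' : Submodule R I := Submodule.comap I.subtype (Ring.jacobson R)
  have hw : J' ≤ LinearMap.ker w := by
    intro x hx
    have := hu x.1 hx
    simp only [w, LinearMap.mem_ker, LinearMap.sub_apply, LinearMap.comp_apply,
      Submodule.subtype_apply, this, sub_eq_zero]
    rfl
  obtain ⟨v, hv⟩ := IsSemisimpleModule.extension_property (R := R)
    (Submodule.mapQ J' (Ring.jacobson R) I.subtype le_rfl) (by
      rw [← LinearMap.ker_eq_bot, Submodule.ker_mapQ]
      simp [J']) (Submodule.liftQ J' w hw)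
  refine ⟨u + v ∘ₗ (Submodule.mkQ (Ring.jacobson R)), fun a ha => ?_⟩
  have := LinearMap.congr_fun hv (Submodule.Quotient.mk ⟨a, ha⟩)
  simp only [LinearMap.comp_apply, Submodule.mapQ_apply, Submodule.liftQ_apply] at this
  simp only [LinearMap.add_apply, LinearMap.comp_apply, Submodule.mkQ_apply]
  erw [this]
  simp [w]

theorem injective_of_jacobson {R : Type} [Ring R] [IsSemiprimaryRing R] {N : Type} [AddCommGroup N]
    [Module R N] (h : ∀ g : (Ring.jacobson R : Ideal R) →ₗ[R] N, ∃ u : R →ₗ[R] N,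
      ∀ a (ha : a ∈ Ring.jacobson R), u a = g ⟨a, ha⟩) : Module.Injective R N := by
  apply Module.Baer.injective
  intro I f
  have : Fact (Function.Injective ⇑(Submodule.subtype I)) := ⟨Submodule.subtype_injective _⟩
  let E := Module.Baer.extensionOfMax I.subtype f
  have htop : E.domain = ⊤ := by
    by_contra hne
    have hex : ∃ s, (Ring.jacobson R) ^ s ≤ E.domain := by
      obtain ⟨s, hs⟩ := (IsSemiprimaryRing.isNilpotent : IsNilpotent (Ring.jacobson R))
      exact ⟨s, hs ▸ bot_le⟩
    classical
    obtain ⟨s, hs, hs'⟩ : ∃ s, (Ring.jacobson R) ^ (s+1) ≤ E.domain ∧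
        ¬ (Ring.jacobson R) ^ s ≤ E.domain := by
      have h0 : Nat.find hex ≠ 0 := by
        intro h0
        have := Nat.find_spec hex
        rw [h0, Submodule.pow_zero, Ideal.one_eq_top, top_le_iff] at this
        exact hne this
      obtain ⟨s, hs⟩ := Nat.exists_eq_succ_of_ne_zero h0
      exact ⟨s, by have := Nat.find_spec hex; rwa [hs] at this, Nat.find_min hex (by omega)⟩
    obtain ⟨y, hy, hy'⟩ := SetLike.not_le_iff_exists.1 hs'
    let Iy : Ideal R := E.domain.comap (LinearMap.toSpanSingleton R R y)
    have hIy : Ring.jacobson R ≤ Iy := by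
      intro a ha
      apply hs
      rcases Nat.eq_zero_or_pos s with rfl | h0
      · rw [zero_add, Submodule.pow_one]
        exact (Ring.jacobson R).mul_mem_right y ha
      · rw [Submodule.pow_succ' _ (by omega)]
        exact Submodule.mul_mem_mul ha hy
    let φ : Iy →ₗ[R] N := E.toLinearPMap.toFun ∘ₗ
      ((LinearMap.toSpanSingleton R R y).restrict (p := Iy) (q := E.domain) (fun x hx => hx))
    obtain ⟨u, hu⟩ := baer_of_jacobson_le h Iy hIy φ
    have hu' : ∀ (c : R) (hc : c • y ∈ E.domain), c • u 1 = E.toLinearPMap ⟨c • y, hc⟩ := by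
      intro c hc
      rw [← map_smul, smul_eq_mul, mul_one, hu c hc]
      rfl
    have H : ∀ c : R, c • y = 0 → c • u 1 = 0 := by
      intro c hc
      rw [hu' c (hc ▸ zero_mem _)]
      have : (⟨c • y, (hc ▸ zero_mem _ : c • y ∈ E.domain)⟩ : E.domain) = 0 := Subtype.ext hc
      rw [this, LinearPMap.map_zero]
    let Q := LinearPMap.mkSpanSingleton' (σ := RingHom.id R) y (u 1) H
    have hag : ∀ (a : E.domain) (b : Q.domain), (a : R) = b → E.toLinearPMap a = Q b := by
      rintro ⟨a, ha⟩ ⟨b, hb⟩ hab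
      obtain ⟨c, rfl⟩ := Submodule.mem_span_singleton.1 hb
      change a = c • y at hab
      subst hab
      rw [LinearPMap.mkSpanSingleton'_apply]
      exact (hu' c ha).symm
    let E' : Module.Baer.ExtensionOf I.subtype f :=
      { toLinearPMap := E.toLinearPMap.sup Q hag
        le := E.le.trans le_sup_left
        is_extension := fun m => by
          rw [E.is_extension m]
          exact (E.toLinearPMap.left_le_sup Q hag).2 rfl }
    have hle : E ≤ E' := E.toLinearPMap.left_le_sup Q hag
    have := Module.Baer.extensionOfMax_is_max _ _ E' hle
    apply hy'
    have hyE : y ∈ E'.domain := (le_sup_right : Q.domain ≤ _) (Submodule.mem_span_singleton_self y)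
    rw [this] at hyE
    exact hyE
  refine ⟨E.toLinearPMap.toFun ∘ₗ (LinearMap.id.codRestrict E.domain (fun x => htop ▸ trivial)), ?_⟩
  intro x hx
  exact (E.is_extension ⟨x, hx⟩).symm

/-! free resolutions -/
section Ex
variable {A : Type} [Ring A] (n : ℕ → ℕ)
    (d : ∀ l, (Fin (n (l+1)) → A) →ₗ[A] (Fin (n l) → A))

def ExAt (l : ℕ) (K : Type) [AddCommGroup K] [Module A K] : Prop :=
  ∀ g : (Fin (n (l+1)) → A) →ₗ[A] K, g ∘ₗ d (l+1) = 0 →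
    ∃ h : (Fin (n l) → A) →ₗ[A] K, g = h ∘ₗ d l

theorem exists_free_res (A : Type) [Ring A] [IsNoetherianRing A] (J : Ideal A) :
    ∃ (n : ℕ → ℕ) (d : ∀ l, (Fin (n (l+1)) → A) →ₗ[A] (Fin (n l) → A))
      (ε : (Fin (n 0) → A) ≃ₗ[A] A),
      LinearMap.range (d 0) = Submodule.comap ε.toLinearMap J ∧
      ∀ l, LinearMap.range (d (l+1)) = LinearMap.ker (d l) := by
  have H : ∀ s : (Σ n : ℕ, Submodule A (Fin n → A)), ∃ (m : ℕ)
      (f : (Fin m → A) →ₗ[A] (Fin s.1 → A)), LinearMap.range f = s.2 := fun s =>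
    (Submodule.fg_iff_exists_fin_linearMap _ _).1 (IsNoetherian.noetherian s.2)
  choose m f hf using H
  let ε : (Fin 1 → A) ≃ₗ[A] A := LinearEquiv.funUnique (Fin 1) A A
  let st : ℕ → (Σ n : ℕ, Submodule A (Fin n → A)) := fun l =>
    Nat.rec ⟨1, Submodule.comap ε.toLinearMap J⟩ (fun _ s => ⟨m s, LinearMap.ker (f s)⟩) l
  exact ⟨fun l => (st l).1, fun l => f (st l), ε, hf (st 0), fun l => hf (st (l+1))⟩

variable {n d} {K' I K : Type} [AddCommGroup K] [Module A K] [AddCommGroup K'] [Module A K']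
  [AddCommGroup I] [Module A I]

theorem ExAt.down [Module.Injective A I]
    (hd : ∀ l, LinearMap.range (d (l+1)) = LinearMap.ker (d l))
    (i : K' →ₗ[A] I) (p : I →ₗ[A] K) (hi : Function.Injective i) (hp : Function.Surjective p)
    (hip : LinearMap.range i = LinearMap.ker p) {l : ℕ} (h : ExAt n d (l+1) K') :
    ExAt n d l K := by
  intro g hg
  obtain ⟨g', hg'⟩ := Module.projective_lifting_property p g hp
  have h1 : ∀ x, (g' ∘ₗ d (l+1)) x ∈ LinearMap.range i := by
    intro x
    rw [hip, LinearMap.mem_ker]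
    have := LinearMap.congr_fun hg x
    rw [← hg'] at this
    exact this
  let e := LinearEquiv.ofInjective i hi
  let q : (Fin (n (l+2)) → A) →ₗ[A] K' := e.symm.toLinearMap ∘ₗ (LinearMap.codRestrict _ _ h1)
  have hq : ∀ x, i (q x) = g' (d (l+1) x) := by
    intro x
    have := e.apply_symm_apply (LinearMap.codRestrict _ _ h1 x)
    exact congrArg Subtype.val this
  obtain ⟨r, hr⟩ := h q (by
    ext1 x; ext; apply hi
    simp only [LinearMap.comp_apply, hq, LinearMap.zero_apply, map_zero]
    have : d (l+1) (d (l+2) ((LinearMap.single A (fun _ => A) x) 1)) = 0 := by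
      rw [← LinearMap.mem_ker, ← hd]; exact ⟨_, rfl⟩
    rw [this, map_zero])
  obtain ⟨u, hu⟩ := inj_factor (d l) (g' - i ∘ₗ r) (by
    rw [← hd]
    rintro _ ⟨x, rfl⟩
    have := LinearMap.congr_fun hr x
    simp only [LinearMap.comp_apply] at this
    simp [← hq, this])
  refine ⟨p ∘ₗ u, LinearMap.ext fun x => ?_⟩
  have h2 : p (i (r x)) = 0 := by
    rw [← LinearMap.mem_ker, ← hip]; exact ⟨_, rfl⟩
  simp [hu, h2, ← hg']

theorem ExAt.up [Module.Injective A I]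
    (hd : ∀ l, LinearMap.range (d (l+1)) = LinearMap.ker (d l))
    (i : K' →ₗ[A] I) (p : I →ₗ[A] K) (hi : Function.Injective i) (hp : Function.Surjective p)
    (hip : LinearMap.range i = LinearMap.ker p) {l : ℕ} (h : ExAt n d l K) :
    ExAt n d (l+1) K' := by
  intro g hg
  obtain ⟨u, hu⟩ := inj_factor (d (l+1)) (i ∘ₗ g) (by
    rw [← hd]
    rintro _ ⟨x, rfl⟩
    have := LinearMap.congr_fun hg x
    simp only [LinearMap.comp_apply] at this
    simp [this])
  obtain ⟨r, hr⟩ := h (p ∘ₗ u) (LinearMap.ext fun x => by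
    simp only [LinearMap.comp_apply, hu]
    show p (i (g x)) = 0
    rw [← LinearMap.mem_ker, ← hip]; exact ⟨_, rfl⟩)
  obtain ⟨r', hr'⟩ := Module.projective_lifting_property p r hp
  have h1 : ∀ x, (u - r' ∘ₗ d l) x ∈ LinearMap.range i := by
    intro x
    have := LinearMap.congr_fun hr x
    rw [← hr'] at this
    simp only [LinearMap.comp_apply] at this
    rw [hip, LinearMap.mem_ker]
    simp [this]
  let e := LinearEquiv.ofInjective i hi
  let q : (Fin (n (l+1)) → A) →ₗ[A] K' := e.symm.toLinearMap ∘ₗ (LinearMap.codRestrict _ _ h1)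
  have hq : ∀ x, i (q x) = u x - r' (d l x) := by
    intro x
    have := e.apply_symm_apply (LinearMap.codRestrict _ _ h1 x)
    exact congrArg Subtype.val this
  refine ⟨q, LinearMap.ext fun x => hi ?_⟩
  have h2 : d l (d (l+1) x) = 0 := by rw [← LinearMap.mem_ker, ← hd]; exact ⟨_, rfl⟩
  simp [hq, hu, h2]

theorem ExAt.injective [IsSemiprimaryRing A] (ε : (Fin (n 0) → A) ≃ₗ[A] A)
    (h0 : LinearMap.range (d 0) = Submodule.comap ε.toLinearMap (Ring.jacobson A))
    (hd : ∀ l, LinearMap.range (d (l+1)) = LinearMap.ker (d l)) (h : ExAt n d 0 K) :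
    Module.Injective A K := by
  apply injective_of_jacobson
  intro g
  have hm : ∀ x, (ε.toLinearMap ∘ₗ d 0) x ∈ Ring.jacobson A := fun x => by
    have : d 0 x ∈ Submodule.comap ε.toLinearMap (Ring.jacobson A) := h0 ▸ ⟨x, rfl⟩
    exact this
  obtain ⟨r, hr⟩ := h (g ∘ₗ LinearMap.codRestrict _ _ hm) (LinearMap.ext fun x => by
    have h2 : d 0 (d 1 x) = 0 := by rw [← LinearMap.mem_ker, ← hd]; exact ⟨_, rfl⟩
    have : LinearMap.codRestrict _ _ hm (d 1 x) = 0 := Subtype.ext (by simp [h2])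
    simp only [LinearMap.comp_apply, zero_add]
    erw [this]
    simp)
  refine ⟨r ∘ₗ ε.symm.toLinearMap, fun a ha => ?_⟩
  have : ε.symm a ∈ LinearMap.range (d 0) := by rw [h0]; simpa using ha
  obtain ⟨x, hx⟩ := this
  have h3 := LinearMap.congr_fun hr x
  simp only [LinearMap.comp_apply, hx] at h3
  simp only [LinearMap.comp_apply, LinearEquiv.coe_coe]
  rw [← h3]
  congr 1
  ext
  simp [hx]
end Ex

theorem noeth_uniform {k ι : Type} [Field k] [Finite ι] (S : ℕ → Set (MvPolynomial ι k)) :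
    ∃ d, ∀ x : ι → k, (∃ l, ∃ s ∈ S l, MvPolynomial.eval x s ≠ 0) →
      ∃ l ≤ d, ∃ s ∈ S l, MvPolynomial.eval x s ≠ 0 := by
  let I : ℕ →o Ideal (MvPolynomial ι k) :=
    ⟨fun d => Ideal.span (⋃ l ≤ d, S l), fun a b hab => Ideal.span_mono (by
      intro y hy
      simp only [Set.mem_iUnion] at hy ⊢
      obtain ⟨l, hl, h⟩ := hy
      exact ⟨l, hl.trans hab, h⟩)⟩
  obtain ⟨d, hd⟩ := monotone_stabilizes_iff_noetherian.2
    (inferInstance : IsNoetherian (MvPolynomial ι k) (MvPolynomial ι k)) I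
  refine ⟨d, fun x ⟨l, s, hs, hsx⟩ => ?_⟩
  by_contra! hcon
  have h1 : I d ≤ RingHom.ker (MvPolynomial.eval x) := by
    refine Ideal.span_le.2 ?_
    intro y hy
    simp only [Set.mem_iUnion] at hy
    obtain ⟨l', hl', h⟩ := hy
    exact hcon l' hl' y h
  have h2 : s ∈ I (max d l) := Ideal.subset_span (by
    simp only [Set.mem_iUnion]
    exact ⟨l, le_max_right _ _, hs⟩)
  rw [← hd _ (le_max_left _ _)] at h2
  exact hsx (h1 h2)

theorem exact_iff_det {k : Type} [Field k] {I0 I1 I2 : Type} [Fintype I0] [Fintype I1] [Fintype I2]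
    [DecidableEq I0] [DecidableEq I1] [DecidableEq I2] (D : Matrix I1 I0 k) (D' : Matrix I2 I1 k)
    (hD : ∀ v, D'.mulVec (D.mulVec v) = 0) :
    (∀ w, D'.mulVec w = 0 → ∃ v, w = D.mulVec v) ↔
      ∃ (h : Matrix I0 I1 k) (h' : Matrix I1 I2 k), (D * h + h' * D').det ≠ 0 := by
  constructor
  · intro hex
    obtain ⟨s, hs⟩ := Module.projective_lifting_property D.toLin'.rangeRestrict LinearMap.id
      D.toLin'.surjective_rangeRestrict
    obtain ⟨h, hh⟩ := LinearMap.exists_extend s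
    have hDh : ∀ v, D.toLin' (h (D.toLin' v)) = D.toLin' v := by
      intro v
      have h1 := LinearMap.congr_fun hh ⟨D.toLin' v, ⟨v, rfl⟩⟩
      simp only [LinearMap.comp_apply, Submodule.subtype_apply] at h1
      rw [h1]
      exact congrArg Subtype.val (LinearMap.congr_fun hs ⟨D.toLin' v, ⟨v, rfl⟩⟩)
    have : Module.Injective k (I1 → k) := Module.injective_of_isSemisimpleRing k _
    obtain ⟨h', hh'⟩ : ∃ h' : (I2 → k) →ₗ[k] (I1 → k), ∀ x, h' (D'.toLin' x) =
        (LinearMap.id - D.toLin' ∘ₗ h : (I1 → k) →ₗ[k] (I1 → k)) x := by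
      obtain ⟨u, hu⟩ := Module.Injective.extension_property k (I1 → k) _ _
        (Submodule.liftQ (LinearMap.ker D'.toLin') D'.toLin' le_rfl)
        (LinearMap.ker_eq_bot.1 (Submodule.ker_liftQ_eq_bot _ _ _ le_rfl))
        (Submodule.liftQ (LinearMap.ker D'.toLin') (LinearMap.id - D.toLin' ∘ₗ h) (by
          intro w hw
          obtain ⟨v, rfl⟩ := hex w (by simpa using hw)
          have := hDh v
          simp only [Matrix.toLin'_apply] at this
          simp [this]))
      exact ⟨u, fun x => by simpa using LinearMap.congr_fun hu (Submodule.Quotient.mk x)⟩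
    refine ⟨LinearMap.toMatrix' h, LinearMap.toMatrix' h', ?_⟩
    have : D * LinearMap.toMatrix' h + LinearMap.toMatrix' h' * D' = 1 := by
      apply Matrix.toLin'.injective
      rw [map_add, Matrix.toLin'_mul, Matrix.toLin'_mul, Matrix.toLin'_toMatrix',
        Matrix.toLin'_toMatrix', Matrix.toLin'_one]
      refine LinearMap.ext fun x => ?_
      simp only [LinearMap.add_apply, LinearMap.comp_apply, hh']
      simp
    rw [this, Matrix.det_one]
    exact one_ne_zero
  · rintro ⟨h, h', hdet⟩ w hw
    set N := D * h + h' * D' with hN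
    have hinj : Function.Injective N.mulVec := by
      intro a b hab
      have h0 : N.mulVec (a - b) = 0 := by rw [Matrix.mulVec_sub, hab, sub_self]
      exact sub_eq_zero.1 (Matrix.eq_zero_of_mulVec_eq_zero hdet h0)
    have hN1 : ∀ w, D'.mulVec w = 0 → N.mulVec w ∈ LinearMap.range D.toLin' := by
      intro w hw
      refine ⟨h.mulVec w, ?_⟩
      simp [hN, Matrix.add_mulVec, ← Matrix.mulVec_mulVec, hw]
    have hmap : Submodule.map N.toLin' (LinearMap.range D.toLin') = LinearMap.range D.toLin' := by
      apply Submodule.eq_of_le_of_finrank_eq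
      · rintro _ ⟨_, ⟨v, rfl⟩, rfl⟩
        exact hN1 _ (hD v)
      · exact (Submodule.equivMapOfInjective N.toLin' hinj _).finrank_eq.symm
    have h3 := hN1 w hw
    rw [← hmap] at h3
    obtain ⟨_, ⟨v, rfl⟩, hv⟩ := h3
    exact ⟨v, (hinj hv).symm⟩

section semicont
variable {k A : Type} [Field k] [Ring A] [Algebra k A] {a : ℕ} (b : Module.Basis (Fin a) k A)

noncomputable def symMat {n n' : ℕ} (d : (Fin n' → A) →ₗ[A] (Fin n → A)) (m : ℕ) :
    Matrix (Fin n' × Fin m) (Fin n × Fin m) (MvPolynomial (Fin a × Fin m × Fin m) k) :=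
  Matrix.of fun qi pj => ∑ α, MvPolynomial.C (b.repr (d (Pi.single qi.1 1) pj.1) α) *
    MvPolynomial.X (α, qi.2, pj.2)

variable {K : Type} [AddCommGroup K] [Module k K] [Module A K] [IsScalarTower k A K] {m : ℕ}
  (β : Module.Basis (Fin m) k K)

noncomputable def coefVec : (Fin a × Fin m × Fin m) → k := fun t => β.repr (b t.1 • β t.2.2) t.2.1

noncomputable def homVec {n : ℕ} (φ : (Fin n → A) →ₗ[A] K) : (Fin n × Fin m) → k :=
  fun pj => β.repr (φ (Pi.single pj.1 1)) pj.2

theorem homVec_injective {n : ℕ} : Function.Injective (homVec (A := A) (n := n) β) := by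
  intro φ ψ h
  refine LinearMap.pi_ext' fun i => LinearMap.ext_ring ?_
  apply β.repr.injective
  ext j
  exact congrFun h (i, j)

theorem homVec_surjective {n : ℕ} : Function.Surjective (homVec (A := A) (n := n) β) := by
  intro w
  refine ⟨Fintype.linearCombination A (fun p => ∑ j, w (p, j) • β j), ?_⟩
  funext pj
  simp only [homVec, Fintype.linearCombination_apply_single, one_smul]
  rw [β.repr_sum_self]

theorem homVec_comp {n n' : ℕ} (d : (Fin n' → A) →ₗ[A] (Fin n → A)) (φ : (Fin n → A) →ₗ[A] K) :
    homVec β (φ ∘ₗ d) =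
      ((symMat b d m).map (MvPolynomial.eval (coefVec b β))).mulVec (homVec β φ) := by
  funext qi
  obtain ⟨q, i⟩ := qi
  have key : ∀ (c : A) (x : K), β.repr (c • x) i =
      ∑ j, (∑ α, b.repr c α * β.repr (b α • β j) i) * β.repr x j := by
    intro c x
    conv_lhs => rw [← β.sum_repr x, ← b.sum_repr c]
    rw [Finset.smul_sum]
    simp only [map_sum, Finsupp.finsetSum_apply, Finset.sum_smul, smul_assoc, Finset.sum_mul]
    refine Finset.sum_congr rfl fun j _ => Finset.sum_congr rfl fun α _ => ?_
    rw [map_smul]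
    have : b α • (β.repr x j • β j) = β.repr x j • (b α • β j) := by
      rw [← algebraMap_smul A (β.repr x j) (β j), ← algebraMap_smul A (β.repr x j) (b α • β j),
        ← mul_smul, ← mul_smul, Algebra.commutes]
    rw [this, map_smul]
    simp only [Finsupp.smul_apply, smul_eq_mul]
    ring
  have h1 : φ (d (Pi.single q 1)) = ∑ p, d (Pi.single q 1) p • φ (Pi.single p 1) := by
    conv_lhs => rw [pi_eq_sum_univ' (d (Pi.single q 1))]
    rw [map_sum]
    refine Finset.sum_congr rfl fun p _ => ?_
    rw [map_smul]
  show β.repr ((φ ∘ₗ d) (Pi.single q 1)) i = _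
  rw [LinearMap.comp_apply, h1, map_sum, Finsupp.finsetSum_apply,
    Finset.sum_congr rfl (fun p _ => key _ _)]
  simp only [homVec, Matrix.mulVec, dotProduct, Fintype.sum_prod_type, symMat, Matrix.map_apply, Matrix.of_apply,
    map_sum, map_mul, MvPolynomial.eval_C, MvPolynomial.eval_X, coefVec]

noncomputable def detPoly {n0 n1 n2 m : ℕ} (d : (Fin n1 → A) →ₗ[A] (Fin n0 → A))
    (d' : (Fin n2 → A) →ₗ[A] (Fin n1 → A)) (h : Matrix (Fin n0 × Fin m) (Fin n1 × Fin m) k)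
      (h' : Matrix (Fin n1 × Fin m) (Fin n2 × Fin m) k) :
    MvPolynomial (Fin a × Fin m × Fin m) k :=
  let H : Matrix (Fin n0 × Fin m) (Fin n1 × Fin m) (MvPolynomial (Fin a × Fin m × Fin m) k) :=
    Matrix.map h MvPolynomial.C
  let H' : Matrix (Fin n1 × Fin m) (Fin n2 × Fin m) (MvPolynomial (Fin a × Fin m × Fin m) k) :=
    Matrix.map h' MvPolynomial.C
  Matrix.det (symMat b d m * H + H' * symMat b d' m)

def detSet {n0 n1 n2 : ℕ} (d : (Fin n1 → A) →ₗ[A] (Fin n0 → A))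
    (d' : (Fin n2 → A) →ₗ[A] (Fin n1 → A)) (m : ℕ) :
    Set (MvPolynomial (Fin a × Fin m × Fin m) k) :=
  {s | ∃ (h : Matrix (Fin n0 × Fin m) (Fin n1 × Fin m) k)
      (h' : Matrix (Fin n1 × Fin m) (Fin n2 × Fin m) k),
      s = detPoly b d d' h h'}

theorem exAt_iff (n : ℕ → ℕ) (d : ∀ l, (Fin (n (l+1)) → A) →ₗ[A] (Fin (n l) → A))
    (hd : ∀ l, LinearMap.range (d (l+1)) = LinearMap.ker (d l)) (l : ℕ) :
    ExAt n d l K ↔ ∃ s ∈ detSet b (d l) (d (l+1)) m, MvPolynomial.eval (coefVec b β) s ≠ 0 := by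
  have h1 : ExAt n d l K ↔ (∀ w, ((symMat b (d (l+1)) m).map
      (MvPolynomial.eval (coefVec b β))).mulVec w = 0 →
      ∃ v, w = ((symMat b (d l) m).map (MvPolynomial.eval (coefVec b β))).mulVec v) := by
    have z : ∀ {n : ℕ}, homVec (A := A) (n := n) β 0 = 0 := by
      intro n; funext x; simp [homVec]
    constructor
    · intro h w hw
      obtain ⟨g, rfl⟩ := homVec_surjective (A := A) β w
      rw [← homVec_comp] at hw
      obtain ⟨u, hu⟩ := h g (homVec_injective β (hw.trans z.symm))
      exact ⟨homVec β u, by rw [← homVec_comp, hu]⟩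
    · intro h g hg
      obtain ⟨v, hv⟩ := h (homVec β g) (by rw [← homVec_comp, hg, z])
      obtain ⟨u, rfl⟩ := homVec_surjective (A := A) β v
      rw [← homVec_comp] at hv
      exact ⟨u, homVec_injective β hv⟩
  rw [h1, exact_iff_det]
  · have key : ∀ (h : Matrix (Fin (n l) × Fin m) (Fin (n (l+1)) × Fin m) k)
        (h' : Matrix (Fin (n (l+1)) × Fin m) (Fin (n (l+2)) × Fin m) k), MvPolynomial.eval (coefVec b β) (detPoly b (d l) (d (l+1)) h h') =
        ((symMat b (d l) m).map (MvPolynomial.eval (coefVec b β)) * h + h' *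
          (symMat b (d (l+1)) m).map (MvPolynomial.eval (coefVec b β))).det := by
      intro h h'
      rw [detPoly, RingHom.map_det]
      congr 1
      simp only [map_add, RingHom.mapMatrix_apply]
      rw [Matrix.map_mul, Matrix.map_mul, Matrix.map_map, Matrix.map_map]
      congr 2 <;> congr 1 <;> ext <;> simp
    constructor
    · rintro ⟨h, h', hh⟩
      exact ⟨_, ⟨h, h', rfl⟩, by rwa [key]⟩
    · rintro ⟨_, ⟨h, h', rfl⟩, hh⟩
      exact ⟨h, h', by rwa [← key]⟩
  · intro v
    obtain ⟨u, rfl⟩ := homVec_surjective (A := A) β v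
    rw [← homVec_comp, ← homVec_comp]
    have : (u ∘ₗ d l) ∘ₗ d (l+1) = 0 := by
      refine LinearMap.ext fun x => ?_
      have h2 : d l (d (l+1) x) = 0 := by rw [← LinearMap.mem_ker, ← hd]; exact ⟨_, rfl⟩
      simp [h2]
    rw [this]
    funext x; simp [homVec]
end semicont

theorem exAt_uniform (k : Type) {A : Type} [Field k] [Ring A] [Algebra k A] [FiniteDimensional k A]
    (n : ℕ → ℕ) (d : ∀ l, (Fin (n (l+1)) → A) →ₗ[A] (Fin (n l) → A))
    (hd : ∀ l, LinearMap.range (d (l+1)) = LinearMap.ker (d l)) (C : ℕ) :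
    ∃ N, ∀ (K : Type) [AddCommGroup K] [Module k K] [Module A K] [IsScalarTower k A K]
      [FiniteDimensional k K], Module.finrank k K ≤ C → (∃ l, ExAt n d l K) →
        ∃ l ≤ N, ExAt n d l K := by
  let b := Module.finBasis k A
  choose N hN using fun m => noeth_uniform (fun l => detSet b (d l) (d (l+1)) m)
  refine ⟨(Finset.range (C+1)).sup N, ?_⟩
  intro K _ _ _ _ _ hK ⟨l, hl⟩
  let β := Module.finBasis k K
  obtain ⟨l', hl', h⟩ := hN _ (coefVec b β) ⟨l, (exAt_iff b β n d hd l).1 hl⟩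
  exact ⟨l', hl'.trans (Finset.le_sup (f := N) (by simp; omega)), (exAt_iff b β n d hd l').2 h⟩

theorem inj_of_chain (k : Type) {A : Type} [Field k] [Ring A] [Algebra k A] [FiniteDimensional k A]
    (K I : ℕ → Type) [∀ t, AddCommGroup (K t)] [∀ t, Module k (K t)] [∀ t, Module A (K t)]
    [∀ t, IsScalarTower k A (K t)] [∀ t, FiniteDimensional k (K t)]
    [∀ t, AddCommGroup (I t)] [∀ t, Module A (I t)] (hI : ∀ t, Module.Injective A (I t))
    (i : ∀ t, K (t+1) →ₗ[A] I t) (p : ∀ t, I t →ₗ[A] K t) (hi : ∀ t, Function.Injective (i t))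
    (hp : ∀ t, Function.Surjective (p t)) (hip : ∀ t, LinearMap.range (i t) = LinearMap.ker (p t))
    (C : ℕ) (hC : ∀ t, Module.finrank k (K t) ≤ C) (h0 : Subsingleton (K 0)) :
    ∀ t, Module.Injective A (K t) := by
  have : IsArtinianRing A := IsArtinianRing.of_finite k A
  obtain ⟨n, d, ε, hε, hd⟩ := exists_free_res A (Ring.jacobson A)
  obtain ⟨N, hN⟩ := exAt_uniform k n d hd C
  have hup : ∀ t, ExAt n d t (K t) := by
    intro t
    induction t with
    | zero => exact fun g _ => ⟨0, LinearMap.ext fun x => Subsingleton.elim _ _⟩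
    | succ t ih => exact ih.up hd (i t) (p t) (hi t) (hp t) (hip t)
  have hdown : ∀ l t, ExAt n d l (K (t + l)) → ExAt n d 0 (K t) := by
    intro l
    induction l with
    | zero => exact fun t h => h
    | succ l ih => exact fun t h => ih t (ExAt.down hd (i (t+l)) (p _) (hi _) (hp _) (hip _) h)
  have hstep : ∀ t, Module.Injective A (K (t+1)) → Module.Injective A (K t) := by
    intro t ht
    obtain ⟨r, hr⟩ := Module.Injective.extension_property A (K (t+1)) _ _ (i t) (hi t) LinearMap.id
    have hr' : ∀ x, r (i t x) = x := fun x => LinearMap.congr_fun hr x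
    constructor
    intro X Y _ _ _ _ f hf g
    -- section of p
    have hs : ∃ s : K t →ₗ[A] I t, p t ∘ₗ s = LinearMap.id := by
      let e : I t →ₗ[A] I t := LinearMap.id - i t ∘ₗ r
      have he : LinearMap.ker (p t) ≤ LinearMap.ker e := by
        rw [← hip]
        rintro _ ⟨x, rfl⟩
        simp [e, hr']
      let q := (p t).quotKerEquivOfSurjective (hp t)
      refine ⟨Submodule.liftQ _ e he ∘ₗ q.symm.toLinearMap, LinearMap.ext fun x => ?_⟩
      obtain ⟨y, rfl⟩ := hp t x
      have hy : q.symm (p t y) = Submodule.Quotient.mk y := by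
        rw [LinearEquiv.symm_apply_eq]; rfl
      have hz : p t (i t (r y)) = 0 := by rw [← LinearMap.mem_ker, ← hip]; exact ⟨_, rfl⟩
      simp [hy, e, hz]
    obtain ⟨s, hs⟩ := hs
    obtain ⟨u, hu⟩ := (hI t).out f hf (s ∘ₗ g)
    exact ⟨p t ∘ₗ u, fun x => by
      rw [LinearMap.comp_apply, hu]; exact LinearMap.congr_fun hs (g x)⟩
  have hback : ∀ l t, Module.Injective A (K (t + l)) → Module.Injective A (K t) := by
    intro l
    induction l with
    | zero => exact fun t h => h
    | succ l ih => exact fun t h => ih t (hstep _ h)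
  intro t
  obtain ⟨l, hl, h⟩ := hN (K (t + N)) (hC _) ⟨_, hup _⟩
  have h1 : ExAt n d 0 (K (t + (N - l))) := hdown l _ (by
    have : t + (N - l) + l = t + N := by omega
    rwa [this])
  exact hback (N - l) t (h1.injective ε hε hd)

class TS (A T : Type) [Ring A] [Ring T] [Module A T] where
  fst : T →+* A
  fst_one : ∀ a : A, fst (a • (1 : T)) = a
  st : ∀ (a : A) (s t : T), (a • s) * t = a • (s * t)
  sq : ∀ s t : T, fst s = 0 → fst t = 0 → s * t = 0

instance {A T : Type} [Ring A] [Ring T] [Module A T] [TS A T] : IsScalarTower A T T :=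
  ⟨fun a s t => TS.st a s t⟩

theorem TS.smul_eq {A T M : Type} [Ring A] [Ring T] [Module A T] [TS A T] [AddCommGroup M]
    [Module T M] [Module A M] [IsScalarTower A T M] (t : T) (m : M) :
    t • m = TS.fst (A := A) t • m + (t - TS.fst (A := A) t • (1:T)) • m := by
  rw [sub_smul, smul_assoc, one_smul]; abel

theorem TS.fst_sub {A T : Type} [Ring A] [Ring T] [Module A T] [TS A T] (t : T) :
    TS.fst (A := A) (t - TS.fst (A := A) t • (1:T)) = 0 := by
  rw [map_sub, TS.fst_one, sub_self]

theorem TS.fst_smul {A T : Type} [Ring A] [Ring T] [Module A T] [TS A T] (a : A) (t : T) :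
    TS.fst (A := A) (a • t) = a * TS.fst t := by
  conv_lhs => rw [← one_mul t, ← TS.st, map_mul, TS.fst_one]

theorem TS.mem_jac {A T : Type} [Ring A] [Ring T] [Module A T] [TS A T] (d : T)
    (hd : TS.fst (A := A) d = 0) : d ∈ Ring.jacobson T := by
  rw [← Ideal.jacobson_bot, Ideal.mem_jacobson_iff]
  intro y
  refine ⟨1 - y * d, ?_⟩
  have : d * (y * d) = 0 := TS.sq (A := A) _ _ hd (by rw [map_mul, hd, mul_zero])
  have h2 : (1 - y * d) * y * d + (1 - y * d) - 1 = - (y * (d * (y * d))) := by noncomm_ring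
  rw [h2, this]
  simp

/-- make a `T`-linear map -/
def TS.mkT {A T M N : Type} [Ring A] [Ring T] [Module A T] [TS A T] [AddCommGroup M]
    [Module T M] [Module A M] [IsScalarTower A T M] [AddCommGroup N]
    [Module T N] [Module A N] [IsScalarTower A T N] (φ : M →ₗ[A] N)
    (h : ∀ (d : T) (m : M), TS.fst (A := A) d = 0 → φ (d • m) = d • φ m) : M →ₗ[T] N where
  toFun := φ
  map_add' := φ.map_add
  map_smul' t m := by
    simp only [RingHom.id_apply]
    rw [TS.smul_eq (A := A) t m, TS.smul_eq (A := A) t (φ m), map_add, map_smul,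
      h _ _ (TS.fst_sub t)]

/-- restrict a `T`-linear map -/
def TS.res (A : Type) {T M N : Type} [Ring A] [Ring T] [Module A T] [TS A T] [AddCommGroup M]
    [Module T M] [Module A M] [IsScalarTower A T M] [AddCommGroup N]
    [Module T N] [Module A N] [IsScalarTower A T N] (φ : M →ₗ[T] N) : M →ₗ[A] N where
  toFun := φ
  map_add' := φ.map_add
  map_smul' a m := by
    simp only [RingHom.id_apply]
    rw [← one_smul T m, ← smul_assoc, map_smul, smul_assoc, one_smul, one_smul]

structure Grading (A T M : Type) [Ring A] [Ring T] [Module A T] [TS A T] [AddCommGroup M]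
    [Module T M] [Module A M] where
  p : ℕ → M →ₗ[A] M
  suc : ∀ j (d : T) m, TS.fst (A := A) d = 0 → p (j+1) (d • m) = d • p j m
  zer : ∀ (d : T) m, TS.fst (A := A) d = 0 → p 0 (d • m) = 0
  idem : ∀ i j m, p i (p j m) = if i = j then p j m else 0
  len : ℕ
  sum : ∀ m, ∑ j ∈ Finset.range len, p j m = m

namespace Grading
variable {A T M N : Type} [Ring A] [Ring T] [Module A T] [TS A T] [AddCommGroup M]
    [Module T M] [Module A M] [IsScalarTower A T M] [AddCommGroup N]
    [Module T N] [Module A N] [IsScalarTower A T N] (G : Grading A T M) (H : Grading A T N)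

theorem idem_self (i : ℕ) (m : M) : G.p i (G.p i m) = G.p i m := by rw [G.idem, if_pos rfl]

theorem idem_ne {i j : ℕ} (h : i ≠ j) (m : M) : G.p i (G.p j m) = 0 := by rw [G.idem, if_neg h]

theorem ext' {x y : M} (h : ∀ j, G.p j x = G.p j y) : x = y := by
  rw [← G.sum x, ← G.sum y]
  exact Finset.sum_congr rfl fun j _ => h j

theorem p_len {j : ℕ} (hj : G.len ≤ j) (m : M) : G.p j m = 0 := by
  rw [← G.sum m, map_sum]
  refine Finset.sum_eq_zero fun i hi => G.idem_ne ?_ m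
  have := Finset.mem_range.1 hi
  omega

/-- grading on a graded submodule -/
def sub (S : Submodule T M) (hS : ∀ j x, x ∈ S → G.p j x ∈ S) : Grading A T S where
  p j :=
    { toFun := fun x => ⟨G.p j x, hS j x x.2⟩
      map_add' := fun x y => Subtype.ext (by simp)
      map_smul' := fun a x => Subtype.ext (by
        show G.p j (a • (x : M)) = a • G.p j x
        rw [map_smul]) }
  suc j d m hd := Subtype.ext (G.suc j d m hd)
  zer d m hd := Subtype.ext (G.zer d m hd)
  idem i j m := Subtype.ext (by
    have := G.idem i j m
    simp only [LinearMap.coe_mk, AddHom.coe_mk]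
    rw [this]
    split_ifs <;> rfl)
  len := G.len
  sum m := Subtype.ext (by
    rw [Submodule.coe_sum]
    exact G.sum m)

theorem sub_p (S : Submodule T M) (hS : ∀ j x, x ∈ S → G.p j x ∈ S) (j : ℕ) (x : S) :
    (((G.sub S hS).p j x : S) : M) = G.p j x := rfl

/-- inflated modules live in degree zero -/
def conc (hM : ∀ (d : T) (m : M), TS.fst (A := A) d = 0 → d • m = 0) : Grading A T M where
  p j := if j = 0 then LinearMap.id else 0
  suc j d m hd := by simp [hM d _ hd]
  zer d m hd := by simp [hM d _ hd]
  idem i j m := by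
    rcases i with _ | i <;> rcases j with _ | j <;> simp
  len := 1
  sum m := by simp

theorem jac_stable (j : ℕ) (x : M) (hx : x ∈ (Ring.jacobson T) • (⊤ : Submodule T M)) :
    G.p j x ∈ (Ring.jacobson T) • (⊤ : Submodule T M) := by
  refine Submodule.smul_induction_on hx ?_ ?_
  · intro t ht m _
    have h1 : t - TS.fst (A := A) t • (1:T) ∈ Ring.jacobson T := TS.mem_jac _ (TS.fst_sub t)
    have h2 : TS.fst (A := A) t • (1:T) ∈ Ring.jacobson T := by
      have := sub_mem ht h1
      rwa [sub_sub_cancel] at this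
    rw [TS.smul_eq (A := A) t m, map_add, map_smul]
    refine add_mem ?_ ?_
    · have : TS.fst (A := A) t • G.p j m = (TS.fst (A := A) t • (1:T)) • G.p j m := by
        rw [smul_assoc, one_smul]
      rw [this]
      exact Submodule.smul_mem_smul h2 trivial
    · rcases j with _ | j
      · rw [G.zer _ _ (TS.fst_sub t)]
        exact zero_mem _
      · rw [G.suc _ _ _ (TS.fst_sub t)]
        exact Submodule.smul_mem_smul h1 trivial
  · intro x y hx hy
    rw [map_add]
    exact add_mem hx hy

/-- degree zero part of an A-linear map -/
def part (g : M →ₗ[A] M) : M →ₗ[A] M := ∑ j ∈ Finset.range G.len, G.p j ∘ₗ g ∘ₗ G.p j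

theorem part_apply (g : M →ₗ[A] M) (x : M) : G.part g x =
    ∑ j ∈ Finset.range G.len, G.p j (g (G.p j x)) := by
  simp [part]

theorem p_part (g : M →ₗ[A] M) (l : ℕ) (x : M) : G.p l (G.part g x) = G.p l (g (G.p l x)) := by
  rw [part_apply, map_sum]
  by_cases hl : l < G.len
  · rw [Finset.sum_eq_single l]
    · rw [G.idem_self]
    · intro b _ hb
      exact G.idem_ne hb.symm _
    · intro h
      exact absurd (Finset.mem_range.2 hl) h
  · rw [G.p_len (not_lt.1 hl), Finset.sum_eq_zero]
    intro j hj
    exact G.p_len (not_lt.1 hl) _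

/-- degree zero part, T-linear -/
def partT (g : M →ₗ[T] M) : M →ₗ[T] M   := TS.mkT (G.part (TS.res A g)) (by
  intro d m hd
  refine G.ext' fun j => ?_
  rw [G.p_part]
  rcases j with _ | j
  · rw [G.zer _ _ hd, G.zer _ _ hd, map_zero, map_zero]
  · rw [G.suc _ _ _ hd, G.suc _ _ _ hd, G.p_part]
    show G.p (j+1) (g (d • G.p j m)) = d • G.p j (g (G.p j m))
    rw [map_smul, G.suc _ _ _ hd])

theorem p_partT (g : M →ₗ[T] M) (l : ℕ) (x : M) : G.p l (G.partT g x) = G.p l (g (G.p l x)) :=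
  G.p_part _ l x

theorem partT_apply (g : M →ₗ[T] M) (x : M) : G.partT g x =
    ∑ j ∈ Finset.range G.len, G.p j (g (G.p j x)) := G.part_apply _ x

theorem partT_graded (g : M →ₗ[T] M) (l : ℕ) (x : M) :
    G.p l (G.partT g x) = G.partT g (G.p l x) := by
  refine G.ext' fun i => ?_
  rw [G.p_partT, G.p_partT, G.idem, G.idem]
  split_ifs with h
  · subst h; rfl
  · simp

end Grading

theorem ss_of_torsion {R M : Type} [Ring R] [IsSemiprimaryRing R] [AddCommGroup M] [Module R M]
    (ht : ∀ a ∈ Ring.jacobson R, ∀ m : M, a • m = 0) : IsSemisimpleModule R M := by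
  have key : ∀ m : M, ∃ u : (R ⧸ Ring.jacobson R) →ₗ[R] M, u (Submodule.Quotient.mk 1) = m := by
    intro m
    refine ⟨Submodule.liftQ (Ring.jacobson R) (LinearMap.toSpanSingleton R M m) ?_, ?_⟩
    · intro a ha
      exact ht a ha m
    · exact one_smul R m
  choose u hu using key
  let g : (M →₀ (R ⧸ Ring.jacobson R)) →ₗ[R] M := Finsupp.lsum ℕ u
  have hg : Function.Surjective g := fun m => ⟨Finsupp.single m (Submodule.Quotient.mk 1), by
      show Finsupp.lsum ℕ u _ = m
      rw [Finsupp.lsum_single, hu]⟩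
  have := jac_semisimple R
  exact IsSemisimpleModule.of_surjective g hg

theorem nilp_of_le_jac {R P : Type} [Ring R] [IsSemiprimaryRing R] [AddCommGroup P] [Module R P]
    (g : P →ₗ[R] P) (hg : ∀ x, g x ∈ Ring.jacobson R • (⊤ : Submodule R P)) :
    ∃ n, ∀ x, (g ^ n) x = 0 := by
  obtain ⟨s, hs⟩ := (IsSemiprimaryRing.isNilpotent : IsNilpotent (Ring.jacobson R))
  have h1 : ∀ n, ∀ x, (g ^ n) x ∈ (Ring.jacobson R) ^ n • (⊤ : Submodule R P) := by
    intro n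
    induction n with
    | zero => intro x; rw [Submodule.pow_zero, Ideal.one_eq_top, Submodule.top_smul]; trivial
    | succ n ih =>
      intro x
      rw [pow_succ', Submodule.pow_succ, Submodule.mul_smul]
      have h2 : Submodule.map g ((Ring.jacobson R) ^ n • (⊤ : Submodule R P)) ≤
          Ring.jacobson R ^ n • Ring.jacobson R • (⊤ : Submodule R P) := by
        rw [Submodule.map_smul'']
        refine Submodule.smul_mono le_rfl ?_
        rintro _ ⟨y, _, rfl⟩
        exact hg y
      exact h2 ⟨_, ih x, rfl⟩
  refine ⟨s, fun x => ?_⟩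
  have := h1 s x
  rw [hs] at this
  simpa using this

theorem ker_le_jac {A T P M : Type} [Ring A] [Ring T] [Module A T] [TS A T] [IsSemiprimaryRing T]
    [AddCommGroup P] [Module T P] [Module A P] [IsScalarTower A T P] [Module.Projective T P]
    [AddCommGroup M] [Module T M] [Module A M] [IsScalarTower A T M]
    (G : Grading A T P) (H : Grading A T M) (π : P →ₗ[T] M) (hπ : ∀ j x, π (G.p j x) = H.p j (π x))
    (hnil : ∀ g : P →ₗ[T] P, (∀ j x, G.p j (g x) = g (G.p j x)) → (∀ x, π (g x) = 0) →
      IsNilpotent g) (x : P) (hx : π x = 0) : x ∈ Ring.jacobson T • (⊤ : Submodule T P) := by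
  set JP := Ring.jacobson T • (⊤ : Submodule T P) with hJP
  have : IsSemisimpleModule T (P ⧸ JP) := ss_of_torsion (by
    rintro a ha m
    obtain ⟨m, rfl⟩ := Submodule.Quotient.mk_surjective _ m
    rw [← Submodule.Quotient.mk_smul, Submodule.Quotient.mk_eq_zero]
    exact Submodule.smul_mem_smul ha trivial)
  let K := LinearMap.ker π
  let L := K.map JP.mkQ
  obtain ⟨r, hr⟩ := IsSemisimpleModule.extension_property L.subtype (Submodule.subtype_injective _)
    LinearMap.id
  let q : K →ₗ[T] L := JP.mkQ.restrict (fun x hx => ⟨x, hx, rfl⟩)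
  have hq : Function.Surjective q := by
    rintro ⟨_, ⟨y, hy, rfl⟩⟩
    exact ⟨⟨y, hy⟩, rfl⟩
  obtain ⟨g', hg'⟩ := Module.projective_lifting_property q (r ∘ₗ JP.mkQ) hq
  let g : P →ₗ[T] P := K.subtype ∘ₗ g'
  have hgK : ∀ x, π (g x) = 0 := fun x => (g' x).2
  have hgJ : ∀ x, π x = 0 → g x - x ∈ JP := by
    intro x hx
    have h1 := LinearMap.congr_fun hg' x
    have h2 := LinearMap.congr_fun hr ⟨JP.mkQ x, ⟨x, hx, rfl⟩⟩
    simp only [LinearMap.comp_apply] at h1 h2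
    have h3 := h1.trans h2
    have h4 : JP.mkQ (g x) = JP.mkQ x := congrArg Subtype.val h3
    rwa [← sub_eq_zero, ← map_sub, ← LinearMap.mem_ker, Submodule.ker_mkQ] at h4
  have h0K : ∀ x, π (G.partT g x) = 0 := by
    intro x
    rw [G.partT_apply, map_sum]
    refine Finset.sum_eq_zero fun j _ => ?_
    rw [hπ, hgK, map_zero]
  have h0J : ∀ x, π x = 0 → G.partT g x - x ∈ JP := by
    intro x hx
    have : G.partT g x - x = ∑ j ∈ Finset.range G.len, G.p j (g (G.p j x) - G.p j x) := by
      simp only [map_sub, Finset.sum_sub_distrib, G.idem_self, G.sum]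
      rw [G.partT_apply]
    rw [this]
    refine Submodule.sum_mem _ fun j _ => G.jac_stable j _ (hgJ _ ?_)
    rw [hπ, hx, map_zero]
  obtain ⟨n, hn⟩ := hnil (G.partT g) (G.partT_graded g) h0K
  have : ∀ n, π (((G.partT g) ^ n) x) = 0 ∧ ((G.partT g) ^ n) x - x ∈ JP := by
    intro n
    induction n with
    | zero => simp [hx]
    | succ n ih =>
      rw [pow_succ']
      refine ⟨h0K _, ?_⟩
      have := add_mem (h0J _ ih.1) ih.2
      rwa [sub_add_sub_cancel] at this
  have h2 := (this n).2
  rw [hn] at h2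
  simpa using h2

/-- bundled graded modules -/
structure GM (k A T : Type) [Field k] [Ring A] [Ring T] [Algebra k A] [Algebra k T] [Module A T]
    [TS A T] where
  M : Type
  [i1 : AddCommGroup M]
  [i2 : Module T M]
  [i3 : Module A M]
  [i4 : IsScalarTower A T M]
  [i5 : Module k M]
  [i6 : IsScalarTower k T M]
  [i7 : IsScalarTower k A M]
  [i8 : FiniteDimensional k M]
  G : Grading A T M

attribute [instance] GM.i1 GM.i2 GM.i3 GM.i4 GM.i5 GM.i6 GM.i7 GM.i8

section free
variable {A T : Type} [Ring A] [Ring T] [Module A T] [TS A T]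

/-- free graded module -/
def freeGrading {ι : Type} (δ : ι → ℕ) (N : ℕ) (hδ : ∀ i, δ i + 1 < N) : Grading A T (ι → T) where
  p l :=
    { toFun := fun x i => (if δ i = l then TS.fst (A := A) (x i) • (1:T) else 0) +
        (if δ i + 1 = l then x i - TS.fst (A := A) (x i) • (1:T) else 0)
      map_add' := fun x y => by
        funext i
        simp only [Pi.add_apply, map_add, add_smul]
        split_ifs <;> abel
      map_smul' := fun a x => by
        funext i
        simp only [Pi.smul_apply, TS.fst_smul, mul_smul, RingHom.id_apply]
        split_ifs <;> simp [smul_sub] }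
  suc j d x hd := by
    funext i
    have h1 : d * (x i - TS.fst (A := A) (x i) • (1:T)) = 0 := TS.sq (A := A) _ _ hd (TS.fst_sub _)
    rw [mul_sub, sub_eq_zero] at h1
    simp only [LinearMap.coe_mk, AddHom.coe_mk, Pi.smul_apply, smul_eq_mul, map_mul, hd, zero_mul,
      zero_smul, ite_self, zero_add, sub_zero, mul_add, add_left_inj]
    split_ifs with h2 h3 h3
    · omega
    · rw [h1]; simp
    · rw [mul_sub, h1]; simp
    · simp
  zer d x hd := by
    funext i
    simp [map_mul, hd]
  idem i j x := by
    funext s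
    simp only [LinearMap.coe_mk, AddHom.coe_mk]
    by_cases hij : i = j
    · subst hij
      by_cases h1 : δ s = i
      · have h2 : ¬ (δ s + 1 = i) := by omega
        simp only [if_pos h1, if_neg h2, add_zero, TS.fst_one, if_true]
      · by_cases h2 : δ s + 1 = i
        · simp only [if_neg h1, if_pos h2, zero_add, TS.fst_sub, zero_smul, sub_zero, if_true]
        · simp only [if_neg h1, if_neg h2, zero_add, if_true]
    · simp only [if_neg hij]
      by_cases h1 : δ s = i
      · have h2 : ¬ (δ s + 1 = i) := by omega
        have h3 : ¬ (δ s = j) := by omega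
        simp only [if_pos h1, if_neg h2, if_neg h3, zero_add, add_zero]
        split_ifs <;> simp [TS.fst_one]
      · by_cases h2 : δ s + 1 = i
        · have h4 : ¬ (δ s + 1 = j) := by omega
          simp only [if_neg h1, if_pos h2, if_neg h4, zero_add, add_zero]
          split_ifs <;> simp [TS.fst_one]
        · simp [h1, h2]
  len := N
  sum x := by
    funext i
    have := hδ i
    rw [Finset.sum_apply]
    simp only [LinearMap.coe_mk, AddHom.coe_mk, Finset.sum_add_distrib, Finset.sum_ite_eq,
      Finset.mem_range]
    rw [if_pos (by omega), if_pos (by omega)]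
    abel

theorem freeGrading_p {ι : Type} (δ : ι → ℕ) (N : ℕ) (hδ : ∀ i, δ i + 1 < N) (l : ℕ) (x : ι → T)
    (i : ι) : (freeGrading (A := A) (T := T) δ N hδ).p l x i =
      (if δ i = l then TS.fst (A := A) (x i) • (1:T) else 0) +
        (if δ i + 1 = l then x i - TS.fst (A := A) (x i) • (1:T) else 0) := rfl
end free

variable {k A T : Type} [Field k] [Ring A] [Ring T] [Algebra k A] [Algebra k T] [Module A T]
  [TS A T] [FiniteDimensional k T] [IsScalarTower k A T]

/-- graded submodule -/
@[reducible] def GM.sub (X : GM k A T) (S : Submodule T X.M) (hS : ∀ j x, x ∈ S → X.G.p j x ∈ S) :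
    GM k A T :=
  have : FiniteDimensional k S := inferInstanceAs (FiniteDimensional k (S.restrictScalars k))
  { M := S, G := X.G.sub S hS }

theorem GM.exists_cover (X : GM k A T) : ∃ (P : GM k A T) (π : P.M →ₗ[T] X.M),
    Module.Projective T P.M ∧ Function.Surjective π ∧ ∀ j x, π (P.G.p j x) = X.G.p j (π x) := by
  let b := Module.finBasis k X.M
  let ι := Fin X.G.len × Fin (Module.finrank k X.M)
  let G := freeGrading (A := A) (T := T) (ι := ι) (fun i => i.1) (X.G.len + 1) (fun i => by omega)
  let P : GM k A T := { M := ι → T, G := G }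
  let v : ι → X.M := fun i => X.G.p i.1 (b i.2)
  let π : (ι → T) →ₗ[T] X.M := Fintype.linearCombination T v
  have hv : ∀ i, v i ∈ LinearMap.range π := fun i => ⟨Pi.single i 1, by simp [π]⟩
  refine ⟨P, π, inferInstanceAs (Module.Projective T (ι → T)), ?_, ?_⟩
  · intro m
    have : m ∈ LinearMap.range π := by
      rw [← b.sum_repr m]
      refine Submodule.sum_mem _ fun s _ => ?_
      rw [← algebraMap_smul T]
      refine Submodule.smul_mem _ _ ?_
      rw [← X.G.sum (b s)]
      refine Submodule.sum_mem _ fun j hj => ?_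
      exact hv (⟨j, Finset.mem_range.1 hj⟩, s)
    exact this
  · intro j x
    show π (G.p j x) = X.G.p j (π x)
    simp only [π, Fintype.linearCombination_apply, map_sum]
    refine Finset.sum_congr rfl fun i _ => ?_
    rw [TS.smul_eq (A := A) (x i), map_add, map_smul]
    erw [freeGrading_p (A := A) (T := T)]
    rw [add_smul]
    congr 1
    · simp only [v, X.G.idem]
      by_cases h : (i.1 : ℕ) = j
      · rw [if_pos h, if_pos h.symm, smul_assoc, one_smul]
      · rw [if_neg h, if_neg (Ne.symm h), zero_smul, smul_zero]
    · rcases j with _ | j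
      · rw [X.G.zer _ _ (TS.fst_sub _)]
        simp
      · rw [X.G.suc _ _ _ (TS.fst_sub _)]
        simp only [v, X.G.idem]
        by_cases h : (i.1 : ℕ) = j
        · rw [if_pos (by omega), if_pos h.symm]
        · rw [if_neg (by omega), if_neg (Ne.symm h), zero_smul, smul_zero]

theorem GM.exists_step (X : GM k A T) : ∃ (P : GM k A T) (π : P.M →ₗ[T] X.M),
    Module.Projective T P.M ∧ Function.Surjective π ∧ (∀ j x, π (P.G.p j x) = X.G.p j (π x)) ∧
    ∀ g : P.M →ₗ[T] P.M, (∀ x, π (g x) = 0) → ∃ n, ∀ x, (g ^ n) x = 0 := by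
  classical
  have : IsArtinianRing T := IsArtinianRing.of_finite k T
  have hex : ∃ n, ∃ (P : GM k A T) (π : P.M →ₗ[T] X.M), Module.Projective T P.M ∧
      Function.Surjective π ∧ (∀ j x, π (P.G.p j x) = X.G.p j (π x)) ∧
      Module.finrank k P.M = n := by
    obtain ⟨P, π, h1, h2, h3⟩ := X.exists_cover
    exact ⟨_, P, π, h1, h2, h3, rfl⟩
  obtain ⟨P, π, hP, hπ, hgr, hn⟩ := Nat.find_spec hex
  refine ⟨P, π, hP, hπ, hgr, fun g hg => nilp_of_le_jac g fun x =>
    ker_le_jac P.G X.G π hgr ?_ (g x) (hg x)⟩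
  clear hg g
  intro g hgg hgK
  have : Module.Finite T P.M := Module.Finite.of_restrictScalars_finite k T P.M
  obtain ⟨n, hn1, hn2⟩ := ((LinearMap.eventually_isCompl_ker_pow_range_pow g).and
    (Filter.eventually_ge_atTop 1)).exists
  refine ⟨n, ?_⟩
  have hpow : ∀ n j x, P.G.p j ((g ^ n) x) = (g ^ n) (P.G.p j x) := by
    intro n
    induction n with
    | zero => simp
    | succ n ih =>
      intro j x
      rw [pow_succ', Module.End.mul_apply, hgg, ih]
      rfl
  let S : Submodule T P.M := LinearMap.ker (g ^ n)
  have hS : ∀ j x, x ∈ S → P.G.p j x ∈ S := by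
    intro j x hx
    rw [LinearMap.mem_ker] at hx ⊢
    rw [← hpow, hx, map_zero]
  let P' : GM k A T := P.sub S hS
  have hle := Nat.find_min' hex (m := Module.finrank k P'.M) ⟨P', π ∘ₗ S.subtype, ?_, ?_, ?_, rfl⟩
  · rw [← hn] at hle
    have h3 : (S.restrictScalars k) = ⊤ := Submodule.eq_top_of_finrank_eq
      (le_antisymm (Submodule.finrank_le _) hle)
    refine LinearMap.ext fun x => ?_
    have : x ∈ S.restrictScalars k := h3 ▸ trivial
    exact this
  · have := Module.Projective.of_split S.subtype (S.projectionOnto _ hn1) (by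
      ext x; simp)
    exact this
  · intro m
    obtain ⟨x, rfl⟩ := hπ m
    have : x ∈ S ⊔ LinearMap.range (g ^ n) := by rw [hn1.sup_eq_top]; trivial
    obtain ⟨u, hu, _, ⟨w, rfl⟩, rfl⟩ := Submodule.mem_sup.1 this
    refine ⟨⟨u, hu⟩, ?_⟩
    obtain ⟨n', rfl⟩ := Nat.exists_eq_add_of_le' hn2
    have : π ((g ^ (n'+1)) w) = 0 := by rw [pow_succ']; exact hgK _
    show π u = _
    rw [map_add, this, add_zero]
  · intro j x
    exact hgr j _

structure Res (k A T : Type) [Field k] [Ring A] [Ring T] [Algebra k A] [Algebra k T] [Module A T]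
    [TS A T] where
  Om : ℕ → GM k A T
  P : ℕ → GM k A T
  π : ∀ t, (P t).M →ₗ[T] (Om t).M
  ι : ∀ t, (Om (t+1)).M →ₗ[T] (P t).M
  proj : ∀ t, Module.Projective T (P t).M
  surj : ∀ t, Function.Surjective (π t)
  inj : ∀ t, Function.Injective (ι t)
  exa : ∀ t, LinearMap.range (ι t) = LinearMap.ker (π t)
  grπ : ∀ t j x, π t ((P t).G.p j x) = (Om t).G.p j (π t x)
  grι : ∀ t j x, ι t ((Om (t+1)).G.p j x) = (P t).G.p j (ι t x)
  nil : ∀ t (g : (P t).M →ₗ[T] (P t).M), (∀ x, π t (g x) = 0) → ∃ n, ∀ x, (g ^ n) x = 0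

section
variable {k A T : Type} [Field k] [Ring A] [Ring T] [Algebra k A] [Algebra k T] [Module A T]
  [TS A T] [FiniteDimensional k T] [IsScalarTower k A T]

theorem exists_res (X : GM k A T) : ∃ R : Res k A T, R.Om 0 = X := by
  choose P π h1 h2 h3 h4 using GM.exists_step (k := k) (A := A) (T := T)
  have hk : ∀ X j x, x ∈ LinearMap.ker (π X) → (P X).G.p j x ∈ LinearMap.ker (π X) := by
    intro X j x hx
    rw [LinearMap.mem_ker] at hx ⊢
    rw [h3, hx, map_zero]
  let nx : GM k A T → GM k A T := fun X => (P X).sub (LinearMap.ker (π X)) (hk X)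
  let Om : ℕ → GM k A T := fun t => @Nat.rec (fun _ => GM k A T) X (fun _ Y => nx Y) t
  exact ⟨{ Om := Om
           P := fun t => P (Om t)
           π := fun t => (π (Om t) : (P (Om t)).M →ₗ[T] (Om t).M)
           ι := fun t => (LinearMap.ker (π (Om t))).subtype
           proj := fun t => h1 _
           surj := fun t => h2 _
           inj := fun t => Submodule.subtype_injective _
           exa := fun t => Submodule.range_subtype _
           grπ := fun t => h3 _
           grι := fun t j x => rfl
           nil := fun t => h4 _ }, rfl⟩

theorem isUnit_of_nil {R M N : Type} [Ring R] [AddCommGroup M] [Module R M] [AddCommGroup N]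
    [Module R N] (π : M →ₗ[R] N)
    (nil : ∀ (g : M →ₗ[R] M), (∀ x, π (g x) = 0) → ∃ n, ∀ x, (g ^ n) x = 0)
    (u : M →ₗ[R] M) (hu : ∀ x, π (u x) = π x) :
    ∃ v : M →ₗ[R] M, (∀ x, v (u x) = x) ∧ (∀ x, u (v x) = x) ∧ ∀ x, π (v x) = π x := by
  obtain ⟨n, hn⟩ := nil (u - LinearMap.id) (fun x => by simp [hu])
  have h1 : IsNilpotent (u - 1 : Module.End R M) := ⟨n, LinearMap.ext hn⟩
  have h2 := h1.isUnit_one_add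
  rw [add_sub_cancel] at h2
  obtain ⟨w, hw⟩ := h2
  have h3 : (↑w⁻¹ : Module.End R M) * u = 1 := by rw [← hw]; exact w.inv_mul
  have h4 : u * (↑w⁻¹ : Module.End R M) = 1 := by rw [← hw]; exact w.mul_inv
  refine ⟨(↑w⁻¹ : Module.End R M), fun x => LinearMap.congr_fun h3 x,
    fun x => LinearMap.congr_fun h4 x, fun x => ?_⟩
  rw [← hu]
  exact congrArg π (LinearMap.congr_fun h4 x)

theorem retract_cover {R M N P P' : Type} [Ring R] [AddCommGroup M] [Module R M] [AddCommGroup N]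
    [Module R N] [AddCommGroup P] [Module R P] [AddCommGroup P'] [Module R P']
    [Module.Projective R P] [Module.Projective R P']
    (π : P →ₗ[R] M) (hπ : Function.Surjective π)
    (nil : ∀ (g : P →ₗ[R] P), (∀ x, π (g x) = 0) → ∃ n, ∀ x, (g ^ n) x = 0)
    (σ : P' →ₗ[R] N) (hσ : Function.Surjective σ) (i : M →ₗ[R] N) (r : N →ₗ[R] M)
    (hri : ∀ x, r (i x) = x) :
    ∃ (α : P →ₗ[R] P') (β : P' →ₗ[R] P), (∀ x, β (α x) = x) ∧ (∀ x, σ (α x) = i (π x)) ∧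
      ∀ x, π (β x) = r (σ x) := by
  obtain ⟨α, hα⟩ := Module.projective_lifting_property σ (i ∘ₗ π) hσ
  obtain ⟨β, hβ⟩ := Module.projective_lifting_property π (r ∘ₗ σ) hπ
  have hα' : ∀ x, σ (α x) = i (π x) := fun x => LinearMap.congr_fun hα x
  have hβ' : ∀ x, π (β x) = r (σ x) := fun x => LinearMap.congr_fun hβ x
  obtain ⟨v, h1, h2, h3⟩ := isUnit_of_nil π nil (β ∘ₗ α) (fun x => by simp [hα', hβ', hri])
  exact ⟨α, v ∘ₗ β, fun x => h1 x, hα', fun x => by simp [h3, hβ']⟩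

theorem Res.retract (R : Res k A T) (P : ℕ → ModuleCat.{0} T) (f : ∀ i, P (i + 1) →ₗ[T] P i)
    (π : (P 0 : Type) →ₗ[T] (R.Om 0).M) (hP : ∀ i, Module.Projective T (P i))
    (hπ : Function.Surjective π) (h0 : LinearMap.range (f 0) = LinearMap.ker π)
    (hf : ∀ i, LinearMap.range (f (i + 1)) = LinearMap.ker (f i)) (t : ℕ) :
    ∃ (N : ModuleCat.{0} T) (σ : P t →ₗ[T] N) (i : (R.Om t).M →ₗ[T] N)
      (r : N →ₗ[T] (R.Om t).M), Function.Surjective σ ∧ LinearMap.range (f t) = LinearMap.ker σ ∧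
      ∀ x, r (i x) = x := by
  induction t with
  | zero => exact ⟨ModuleCat.of T (R.Om 0).M, π, LinearMap.id, LinearMap.id, hπ, h0, fun x => rfl⟩
  | succ t ih =>
    obtain ⟨N, σ, i, r, h1, h2, h3⟩ := ih
    have := R.proj t
    obtain ⟨α, β, e1, e2, e3⟩ := retract_cover (R.π t) (R.surj t) (R.nil t) σ h1 i r h3
    have hfm : ∀ x, f t x ∈ LinearMap.ker σ := fun x => h2 ▸ ⟨x, rfl⟩
    have hπι : ∀ x, R.π t (R.ι t x) = 0 := fun x => by
      rw [← LinearMap.mem_ker, ← R.exa]; exact ⟨x, rfl⟩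
    have him : ∀ x, (α ∘ₗ R.ι t) x ∈ LinearMap.ker σ := fun x => by
      rw [LinearMap.mem_ker, LinearMap.comp_apply, e2, hπι, map_zero]
    let e := LinearEquiv.ofInjective (R.ι t) (R.inj t)
    have hrm : ∀ x, (β ∘ₗ (LinearMap.ker σ).subtype) x ∈ LinearMap.range (R.ι t) := fun x => by
      rw [R.exa, LinearMap.mem_ker, LinearMap.comp_apply, e3]
      have : σ x = 0 := x.2
      simp [this]
    refine ⟨ModuleCat.of T (LinearMap.ker σ), LinearMap.codRestrict _ (f t) hfm,
      LinearMap.codRestrict _ (α ∘ₗ R.ι t) him,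
      e.symm.toLinearMap ∘ₗ LinearMap.codRestrict _ (β ∘ₗ (LinearMap.ker σ).subtype) hrm,
      ?_, ?_, ?_⟩
    · rintro ⟨y, hy⟩
      rw [← h2] at hy
      obtain ⟨x, rfl⟩ := hy
      exact ⟨x, rfl⟩
    · rw [hf, LinearMap.ker_codRestrict]
    · intro x
      simp only [LinearMap.comp_apply, LinearEquiv.coe_coe]
      rw [LinearEquiv.symm_apply_eq]
      exact Subtype.ext (e1 _)

theorem Res.bounded (R : Res k A T) (h : ComplexityLeOne k T (R.Om 0).M) :
    ∃ C, ∀ t, Module.finrank k (R.P t).M ≤ C := by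
  obtain ⟨C, P, f, π, hP, hfin, hC, hπ, h0, hf⟩ := h
  refine ⟨C, fun t => ?_⟩
  obtain ⟨N, σ, i, r, h1, h2, h3⟩ := R.retract P f π hP hπ h0 hf t
  have := R.proj t
  have := hP t
  have := hfin t
  obtain ⟨α, β, e1, e2, e3⟩ := retract_cover (R.π t) (R.surj t) (R.nil t) σ h1 i r h3
  refine le_trans ?_ (hC t)
  let _ : Module k (P t) := Module.compHom (P t) (algebraMap k T)
  have : IsScalarTower k T (P t) := IsScalarTower.of_algebraMap_smul (fun r x => rfl)
  have : Module.Finite k (P t) := Module.Finite.trans T (P t)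
  exact LinearMap.finrank_le_finrank_of_injective (f := α.restrictScalars k)
    (Function.LeftInverse.injective e1)

theorem Res.bounded' (R : Res k A T) (h : ComplexityLeOne k T (R.Om 0).M) :
    ∃ C, ∀ t, Module.finrank k (R.Om t).M ≤ C := by
  obtain ⟨C, hC⟩ := R.bounded h
  refine ⟨C, fun t => le_trans ?_ (hC t)⟩
  exact LinearMap.finrank_le_finrank_of_surjective (f := (R.π t).restrictScalars k) (R.surj t)
end

/-- inflation of an `A`-module to `T` -/
def Infl (A T X : Type) [Ring A] [Ring T] [Module A T] [TS A T] [AddCommGroup X] [Module A X] :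
    Type := X

section infl
variable {A T X : Type} [Ring A] [Ring T] [Module A T] [TS A T] [AddCommGroup X] [Module A X]

instance : AddCommGroup (Infl A T X) := inferInstanceAs (AddCommGroup X)
instance : Module A (Infl A T X) := inferInstanceAs (Module A X)
instance : Module T (Infl A T X) := Module.compHom X (TS.fst (A := A) (T := T))

theorem Infl.smul_def (t : T) (x : Infl A T X) : t • x = TS.fst (A := A) t • x := rfl

instance : IsScalarTower A T (Infl A T X) := ⟨fun a t x => by
  rw [Infl.smul_def, Infl.smul_def, TS.fst_smul, mul_smul]⟩

variable (A T X) in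
/-- the identity -/
def Infl.of : X ≃ₗ[A] Infl A T X := LinearEquiv.refl A X

variable {M N : Type} [AddCommGroup M] [Module T M] [Module A M] [IsScalarTower A T M]
  [AddCommGroup N] [Module T N] [Module A N] [IsScalarTower A T N]

/-- maps from an inflated module -/
def mkInfl (φ : X →ₗ[A] M) (h : ∀ (d : T) x, TS.fst (A := A) d = 0 → d • φ x = 0) :
    Infl A T X →ₗ[T] M :=
  TS.mkT (A := A) (φ ∘ₗ (Infl.of A T X).symm.toLinearMap) (fun d m hd => by
    rw [Infl.smul_def, hd, zero_smul, map_zero]; exact (h d _ hd).symm)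

theorem mkInfl_apply (φ : X →ₗ[A] M) (h : ∀ (d : T) x, TS.fst (A := A) d = 0 → d • φ x = 0)
    (x : X) : mkInfl φ h (Infl.of A T X x) = φ x := rfl

theorem surj_factor {R X Y Z : Type} [Ring R] [AddCommGroup X] [Module R X] [AddCommGroup Y]
    [Module R Y] [AddCommGroup Z] [Module R Z] (f : X →ₗ[R] Y) (hf : Function.Surjective f)
    (w : X →ₗ[R] Z) (h : LinearMap.ker f ≤ LinearMap.ker w) :
    ∃ u : Y →ₗ[R] Z, ∀ x, u (f x) = w x := by
  refine ⟨(LinearMap.ker f).liftQ w h ∘ₗ (f.quotKerEquivOfSurjective hf).symm.toLinearMap,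
    fun x => ?_⟩
  have : (f.quotKerEquivOfSurjective hf).symm (f x) = Submodule.Quotient.mk x := by
    rw [LinearEquiv.symm_apply_eq]; rfl
  simp [this]

namespace Grading

/-- degree piece -/
def deg (G : Grading A T M) (j : ℕ) : Submodule A M := LinearMap.eqLocus (G.p j) LinearMap.id

theorem mem_deg (G : Grading A T M) (j : ℕ) (x : M) : x ∈ G.deg j ↔ G.p j x = x := Iff.rfl

/-- projection -/
def toDeg (G : Grading A T M) (j : ℕ) : M →ₗ[A] G.deg j :=
  LinearMap.codRestrict _ (G.p j) (fun x => G.idem_self j x)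

theorem toDeg_coe (G : Grading A T M) (j : ℕ) (x : M) : (G.toDeg j x : M) = G.p j x := rfl

theorem toDeg_self (G : Grading A T M) (j : ℕ) (x : G.deg j) : G.toDeg j x = x :=
  Subtype.ext x.2

theorem proj_deg0 (G : Grading A T M) [Module.Projective T M] : Module.Projective A (G.deg 0) := by
  refine Module.Projective.of_lifting_property'' fun f hf => ?_
  let q : M →ₗ[T] Infl A T (G.deg 0) := TS.mkT (A := A) ((Infl.of A T (G.deg 0)).toLinearMap ∘ₗ G.toDeg 0)
    (fun d m hd => by
      rw [Infl.smul_def, hd, zero_smul]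
      exact Subtype.ext (G.zer d m hd))
  let f' : Infl A T (G.deg 0 →₀ A) →ₗ[T] Infl A T (G.deg 0) :=
    mkInfl ((Infl.of A T (G.deg 0)).toLinearMap ∘ₗ f) (fun d m hd => by rw [Infl.smul_def, hd, zero_smul])
  obtain ⟨h, hh⟩ := Module.projective_lifting_property f' q hf
  refine ⟨(Infl.of A T (G.deg 0 →₀ A)).symm.toLinearMap ∘ₗ TS.res A h ∘ₗ (G.deg 0).subtype, LinearMap.ext fun x => ?_⟩
  exact (LinearMap.congr_fun hh (x : M)).trans (G.toDeg_self 0 x)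

theorem smul_deg (G : Grading A T M) (n : ℕ) (hn : ∀ x, G.p (n+1) x = 0) (d : T) (x : M)
    (hd : TS.fst (A := A) d = 0) (hx : G.p n x = x) : d • x = 0 := by
  have := G.suc n d x hd
  rw [hn, hx] at this
  exact this.symm

theorem inj_deg (G : Grading A T M) [Module.Injective T M] (n : ℕ) (hn : ∀ x, G.p (n+1) x = 0) :
    Module.Injective A (G.deg n) := by
  refine ⟨fun X Y _ _ _ _ f hf g => ?_⟩
  let f' : Infl A T X →ₗ[T] Infl A T Y :=
    mkInfl ((Infl.of A T Y).toLinearMap ∘ₗ f) (fun d m hd => by rw [Infl.smul_def, hd, zero_smul])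
  let g' : Infl A T X →ₗ[T] M := mkInfl ((G.deg n).subtype ∘ₗ g)
    (fun d x hd => G.smul_deg n hn d _ hd (g x).2)
  obtain ⟨h, hh⟩ := Module.Injective.out f' hf g'
  refine ⟨G.toDeg n ∘ₗ TS.res A h ∘ₗ (Infl.of A T Y).toLinearMap, fun x => ?_⟩
  have : h (Infl.of A T Y (f x)) = g x := hh (Infl.of A T X x)
  refine Subtype.ext ?_
  show G.p n (h (Infl.of A T Y (f x))) = g x
  rw [this]
  exact (g x).2

/-- restriction of a graded map -/
def degMap (G : Grading A T M) (H : Grading A T N) (φ : M →ₗ[T] N)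
    (hφ : ∀ j x, φ (G.p j x) = H.p j (φ x)) (j : ℕ) : G.deg j →ₗ[A] H.deg j :=
  LinearMap.codRestrict _ (TS.res A φ ∘ₗ (G.deg j).subtype) (fun x => by
    rw [mem_deg]
    show H.p j (φ x) = φ x
    rw [← hφ]
    exact congrArg φ x.2)

theorem degMap_coe (G : Grading A T M) (H : Grading A T N) (φ : M →ₗ[T] N)
    (hφ : ∀ j x, φ (G.p j x) = H.p j (φ x)) (j : ℕ) (x : G.deg j) :
    (G.degMap H φ hφ j x : N) = φ x := rfl

theorem degMap_inj (G : Grading A T M) (H : Grading A T N) (φ : M →ₗ[T] N)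
    (hφ : ∀ j x, φ (G.p j x) = H.p j (φ x)) (j : ℕ) (h : Function.Injective φ) :
    Function.Injective (G.degMap H φ hφ j) := fun _ _ hxy =>
  Subtype.ext (h (congrArg Subtype.val hxy))

theorem degMap_surj (G : Grading A T M) (H : Grading A T N) (φ : M →ₗ[T] N)
    (hφ : ∀ j x, φ (G.p j x) = H.p j (φ x)) (j : ℕ) (h : Function.Surjective φ) :
    Function.Surjective (G.degMap H φ hφ j) := fun y => by
  obtain ⟨x, hx⟩ := h y
  refine ⟨G.toDeg j x, Subtype.ext ?_⟩
  rw [degMap_coe, toDeg_coe, hφ, hx]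
  exact y.2

theorem degMap_exact {L : Type} [AddCommGroup L] [Module T L] [Module A L] [IsScalarTower A T L]
    (E : Grading A T L) (G : Grading A T M) (H : Grading A T N) (ψ : L →ₗ[T] M)
    (hψ : ∀ j x, ψ (E.p j x) = G.p j (ψ x)) (φ : M →ₗ[T] N)
    (hφ : ∀ j x, φ (G.p j x) = H.p j (φ x)) (j : ℕ) (h : LinearMap.range ψ = LinearMap.ker φ) :
    LinearMap.range (E.degMap G ψ hψ j) = LinearMap.ker (G.degMap H φ hφ j) := by
  ext x
  constructor
  · rintro ⟨y, rfl⟩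
    refine Subtype.ext ?_
    rw [degMap_coe, degMap_coe]
    have : ψ y ∈ LinearMap.ker φ := h ▸ ⟨_, rfl⟩
    exact this
  · intro hx
    have h1 : (x : M) ∈ LinearMap.ker φ := congrArg Subtype.val hx
    rw [← h] at h1
    obtain ⟨y, hy⟩ := h1
    refine ⟨E.toDeg j y, Subtype.ext ?_⟩
    rw [degMap_coe, toDeg_coe, hψ, hy]
    exact x.2

end Grading
end infl

theorem inj_of_retract {R M N : Type} [Ring R] [AddCommGroup M] [Module R M] [AddCommGroup N]
    [Module R N] [Module.Injective R N] (i : M →ₗ[R] N) (r : N →ₗ[R] M) (h : ∀ x, r (i x) = x) :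
    Module.Injective R M := by
  refine ⟨fun X Y _ _ _ _ f hf g => ?_⟩
  obtain ⟨u, hu⟩ := Module.Injective.out f hf (i ∘ₗ g)
  exact ⟨r ∘ₗ u, fun x => by simp [hu, h]⟩

theorem inj_of_proj {R M : Type} [Ring R] [AddCommGroup M] [Module R M] [Module.Injective R R]
    [Module.Finite R M] [Module.Projective R M] : Module.Injective R M := by
  obtain ⟨n, f, hf⟩ := Module.Finite.exists_fin' R M
  obtain ⟨s, hs⟩ := Module.projective_lifting_property f LinearMap.id hf
  exact inj_of_retract s f (fun x => LinearMap.congr_fun hs x)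

section
variable {k A T : Type} [Field k] [Ring A] [Ring T] [Algebra k A] [Algebra k T] [Module A T]
  [TS A T] [FiniteDimensional k T] [IsScalarTower k A T]

theorem Grading.deg_p {M : Type} [AddCommGroup M] [Module T M] [Module A M] [IsScalarTower A T M]
    (G : Grading A T M) (j : ℕ) (x : G.deg j) : G.p j x = x := x.2

theorem Res.πι (R : Res k A T) (t : ℕ) (x : (R.Om (t+1)).M) : R.π t (R.ι t x) = 0 := by
  rw [← LinearMap.mem_ker, ← R.exa]; exact ⟨x, rfl⟩

theorem Res.P_inj [Module.Injective T T] (R : Res k A T) (t : ℕ) :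
    Module.Injective T (R.P t).M := by
  have := R.proj t
  have : Module.Finite T (R.P t).M := Module.Finite.of_restrictScalars_finite k T _
  exact inj_of_proj

theorem Res.fitting [Module.Injective T T] (R : Res k A T)
    (hend : ∀ e : (R.Om 0).M →ₗ[T] (R.Om 0).M, (∀ x, e x = 0) ∨ Function.Injective e) (t : ℕ) :
    ∀ e : (R.Om t).M →ₗ[T] (R.Om t).M, (∃ n, ∀ x, (e ^ n) x = 0) ∨ Function.Injective e := by
  induction t with
  | zero =>
    intro e
    rcases hend e with h | h
    · exact Or.inl ⟨1, fun x => by simpa using h x⟩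
    · exact Or.inr h
  | succ t ih =>
    intro e
    have := R.P_inj t
    have := R.proj t
    obtain ⟨E, hE⟩ := inj_factor (R.ι t) (R.ι t ∘ₗ e) (by
      rw [LinearMap.ker_eq_bot.2 (R.inj t)]; exact bot_le)
    obtain ⟨e', he'⟩ := surj_factor (R.π t) (R.surj t) (R.π t ∘ₗ E) (by
      rw [← R.exa]
      rintro _ ⟨x, rfl⟩
      rw [LinearMap.mem_ker, LinearMap.comp_apply, hE, LinearMap.comp_apply, R.πι])
    simp only [LinearMap.comp_apply] at hE he'
    rcases ih e' with ⟨n, hn⟩ | hi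
    · left
      have h1 : ∀ n x, R.π t ((E ^ n) x) = (e' ^ n) (R.π t x) := by
        intro n
        induction n with
        | zero => intro x; simp
        | succ n ih =>
          intro x
          rw [pow_succ', pow_succ', Module.End.mul_apply, Module.End.mul_apply, ← he', ih]
      have h2 : ∀ n x, R.ι t ((e ^ n) x) = (E ^ n) (R.ι t x) := by
        intro n
        induction n with
        | zero => intro x; simp
        | succ n ih =>
          intro x
          rw [pow_succ', pow_succ', Module.End.mul_apply, Module.End.mul_apply, ← hE, ih]
      obtain ⟨m, hm⟩ := R.nil t (E ^ n) (fun x => by rw [h1, hn])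
      refine ⟨n * m, fun x => R.inj t ?_⟩
      rw [h2, pow_mul, hm, map_zero]
    · right
      have hs : Function.Surjective e' := (LinearMap.injective_iff_surjective
        (f := e'.restrictScalars k)).1 hi
      let q := LinearEquiv.ofBijective e' ⟨hi, hs⟩
      obtain ⟨F, hF⟩ := Module.projective_lifting_property (R.π t) (q.symm.toLinearMap ∘ₗ R.π t)
        (R.surj t)
      have hF' : ∀ x, R.π t (F x) = q.symm (R.π t x) := fun x => LinearMap.congr_fun hF x
      obtain ⟨v, hv, -, -⟩ := isUnit_of_nil (R.π t) (R.nil t) (F ∘ₗ E) (fun x => by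
        rw [LinearMap.comp_apply, hF', ← he', LinearEquiv.symm_apply_eq]; rfl)
      have hEi : Function.Injective E := by
        intro x y hxy
        rw [← hv x, ← hv y, LinearMap.comp_apply, LinearMap.comp_apply, hxy]
      intro x y hxy
      refine R.inj t (hEi ?_)
      rw [hE, hE, hxy]

/-- truncation -/
def Grading.trunc {M : Type} [AddCommGroup M] [Module T M] [Module A M] [IsScalarTower A T M]
    (G : Grading A T M) (j : ℕ) : M →ₗ[A] M :=
  ∑ i ∈ Finset.range G.len, if j < i then G.p i else 0

theorem Grading.p_trunc {M : Type} [AddCommGroup M] [Module T M] [Module A M]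
    [IsScalarTower A T M] (G : Grading A T M) (j l : ℕ) (x : M) :
    G.p l (G.trunc j x) = if j < l then G.p l x else 0 := by
  rw [Grading.trunc, LinearMap.sum_apply, map_sum]
  have h1 : ∀ i, G.p l ((if j < i then G.p i else 0 : M →ₗ[A] M) x) =
      if l = i then (if j < l then G.p l x else 0) else 0 := by
    intro i
    by_cases hli : l = i
    · subst hli
      by_cases h : j < l
      · simp [h, G.idem_self]
      · simp [h]
    · by_cases h : j < i
      · simp [h, hli, G.idem_ne hli]
      · simp [h, hli]
  simp only [h1, Finset.sum_ite_eq, Finset.mem_range]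
  split_ifs with h2 h3 h3
  · rfl
  · rfl
  · exact (G.p_len (not_lt.1 h2) x).symm
  · rfl

theorem Grading.exists_gap {M : Type} [AddCommGroup M] [Module T M] [Module A M]
    [IsScalarTower A T M] [Module k M] [IsScalarTower k A M] [FiniteDimensional k M]
    (G : Grading A T M) (C : ℕ) (hC : Module.finrank k M ≤ C) : ∃ j ≤ C, ∀ x, G.p j x = 0 := by
  by_contra! hcon
  have : ∀ j : Fin (C+1), ∃ x, G.p j x ≠ 0 := fun j => hcon j (by omega)
  choose x hx using this
  have hli : LinearIndependent k (fun j : Fin (C+1) => G.p j (x j)) := by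
    rw [Fintype.linearIndependent_iff]
    intro g hg i
    have h1 := congrArg (G.p i) hg
    rw [map_sum, map_zero, Finset.sum_eq_single i] at h1
    · rw [LinearMap.map_smul_of_tower, G.idem_self] at h1
      exact (smul_eq_zero.1 h1).resolve_right (hx i)
    · intro b _ hb
      rw [LinearMap.map_smul_of_tower, G.idem_ne, smul_zero]
      exact fun h => hb (Fin.ext h.symm)
    · intro h
      exact absurd (Finset.mem_univ i) h
  have := hli.fintype_card_le_finrank
  rw [Fintype.card_fin] at this
  omega

theorem Res.gap [Module.Injective T T] (R : Res k A T)
    (hend : ∀ e : (R.Om 0).M →ₗ[T] (R.Om 0).M, (∀ x, e x = 0) ∨ Function.Injective e)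
    (C : ℕ) (hC : ∀ t, Module.finrank k (R.Om t).M ≤ C)
    (hne : ∀ t, ∃ x, (R.Om t).G.p 0 x ≠ 0) (t l : ℕ) (hl : C < l) (x : (R.Om t).M) :
    (R.Om t).G.p l x = 0 := by
  obtain ⟨j, hj, hj0⟩ := (R.Om t).G.exists_gap (k := k) C (hC t)
  let e : (R.Om t).M →ₗ[T] (R.Om t).M := TS.mkT ((R.Om t).G.trunc j) (by
    intro d m hd
    refine (R.Om t).G.ext' fun i => ?_
    rw [Grading.p_trunc]
    rcases i with _ | i
    · rw [(R.Om t).G.zer _ _ hd, (R.Om t).G.zer _ _ hd, ite_self]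
    · rw [(R.Om t).G.suc _ _ _ hd, (R.Om t).G.suc _ _ _ hd, Grading.p_trunc]
      by_cases h1 : j = i
      · subst h1
        simp [hj0]
      · have : j < i + 1 ↔ j < i := by omega
        simp only [this]
        split_ifs <;> simp)
  have he : ∀ i x, (R.Om t).G.p i (e x) = if j < i then (R.Om t).G.p i x else 0 :=
    fun i x => (R.Om t).G.p_trunc j i x
  have hee : ∀ x, e (e x) = e x := fun x => (R.Om t).G.ext' fun i => by
    simp only [he]; split_ifs <;> rfl
  rcases R.fitting hend t e with ⟨n, hn⟩ | hi
  · have h1 : ∀ n x, (e ^ (n+1)) x = e x := by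
      intro n
      induction n with
      | zero => intro x; simp
      | succ n ih => intro x; rw [pow_succ', Module.End.mul_apply, ih, hee]
    have h2 : e x = 0 := by
      rw [← h1 n, pow_succ', Module.End.mul_apply, hn, map_zero]
    have h3 := he l x
    rw [h2, map_zero, if_pos (by omega)] at h3
    exact h3.symm
  · exfalso
    obtain ⟨y, hy⟩ := hne t
    have h1 : e y = y := hi (hee y)
    have h2 := he 0 y
    rw [h1, if_neg (by omega)] at h2
    exact hy h2

theorem Res.deg0 (R : Res k A T) (h : ∀ n, ¬ PD A ((R.Om 0).G.deg 0) n) (t : ℕ) :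
    ∀ n, ¬ PD A ((R.Om t).G.deg 0) n := by
  induction t with
  | zero => exact h
  | succ t ih =>
    intro n hn
    have := R.proj t
    have h1 : PD A ((R.P t).G.deg 0) 1 := PD.one_iff.2 (Grading.proj_deg0 _)
    refine ih (n+1) (PD.x3 (Grading.degMap _ _ (R.ι t) (R.grι t) 0)
      (Grading.degMap _ _ (R.π t) (R.grπ t) 0)
      (Grading.degMap_inj _ _ _ _ _ (R.inj t)) (Grading.degMap_surj _ _ _ _ _ (R.surj t))
      (Grading.degMap_exact _ _ _ _ _ _ _ _ (R.exa t)) hn (h1.mono (by omega)))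

theorem Res.P_zero (R : Res k A T) (t j : ℕ) (h1 : ∀ x, (R.Om t).G.p j x = 0)
    (h2 : ∀ x, (R.Om (t+1)).G.p j x = 0) (x) : (R.P t).G.p j x = 0 := by
  have h3 : (R.P t).G.p j x ∈ LinearMap.ker (R.π t) := by
    rw [LinearMap.mem_ker, R.grπ, h1]
  rw [← R.exa] at h3
  obtain ⟨y, hy⟩ := h3
  rw [← (R.P t).G.idem_self, ← hy, ← R.grι, h2, map_zero]

theorem proj_killed {P : Type} [AddCommGroup P] [Module T P] [Module.Projective T P]
    (hf : ∀ t : T, (∀ d, TS.fst (A := A) d = 0 → d * t = 0) → TS.fst (A := A) t = 0)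
    (hP : ∀ (d : T) (x : P), TS.fst (A := A) d = 0 → d • x = 0) (x : P) : x = 0 := by
  obtain ⟨s, hs⟩ := Module.Projective.out (R := T) (P := P)
  rw [← hs x, Finsupp.linearCombination_apply]
  refine Finset.sum_eq_zero fun m _ => hP _ _ (hf _ fun d hd => ?_)
  rw [← smul_eq_mul, ← Finsupp.smul_apply, ← map_smul, hP d x hd, map_zero, Finsupp.zero_apply]

theorem Res.contra [FiniteDimensional k A] [Module.Injective T T]
    (hf : ∀ t : T, (∀ d, TS.fst (A := A) d = 0 → d * t = 0) → TS.fst (A := A) t = 0)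
    (R : Res k A T)
    (hend : ∀ e : (R.Om 0).M →ₗ[T] (R.Om 0).M, (∀ x, e x = 0) ∨ Function.Injective e)
    (C : ℕ) (hC : ∀ t, Module.finrank k (R.Om t).M ≤ C)
    (hX : ∀ j x, (R.Om 0).G.p (j+1) x = 0)
    (hpd : ∀ n, ¬ PD A ((R.Om 0).G.deg 0) n) : False := by
  have hne : ∀ t, ∃ x, (R.Om t).G.p 0 x ≠ 0 := by
    intro t
    by_contra! hcon
    refine R.deg0 hpd t 0 (PD.zero_iff.2 ⟨fun x y => Subtype.ext ?_⟩)
    rw [← Grading.deg_p _ _ x, ← Grading.deg_p _ _ y, hcon, hcon]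
  have hgap := R.gap hend C hC hne
  classical
  have hmax : ∃ n, (∃ t x, (R.Om t).G.p n x ≠ 0) ∧ ∀ j, n < j → ∀ t x, (R.Om t).G.p j x = 0 := by
    let Q : ℕ → Prop := fun n => ∃ t x, (R.Om t).G.p n x ≠ 0
    have hQ0 : Q 0 := ⟨0, hne 0⟩
    refine ⟨Nat.findGreatest Q C, Nat.findGreatest_spec (P := Q) (Nat.zero_le C) hQ0, ?_⟩
    intro j hj t x
    by_contra hcon
    rcases le_or_gt j C with h | h
    · exact Nat.findGreatest_is_greatest hj h ⟨t, x, hcon⟩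
    · exact hcon (hgap t j h x)
  obtain ⟨n, ⟨t, x, hx⟩, hn⟩ := hmax
  have hnP : ∀ j, n < j → ∀ t x, (R.P t).G.p j x = 0 := fun j hj t x =>
    R.P_zero t j (hn j hj t) (hn j hj (t+1)) x
  rcases Nat.eq_zero_or_pos n with h0 | hpos
  · subst h0
    obtain ⟨y, hy⟩ := hne 0
    obtain ⟨z, rfl⟩ := R.surj 0 y
    have := R.proj 0
    refine hy ?_
    have : z = 0 := proj_killed (A := A) (T := T) hf (fun d x hd => (R.P 0).G.ext' fun j => by
      rw [map_zero]
      rcases j with _ | j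
      · exact (R.P 0).G.zer _ _ hd
      · exact hnP _ (by omega) _ _) z
    rw [this, map_zero, map_zero]
  · have hIinj : ∀ t, Module.Injective A ((R.P t).G.deg n) := by
      intro t
      have := R.P_inj t
      exact Grading.inj_deg _ n (hnP _ (by omega) t)
    have hfd : ∀ t, FiniteDimensional k ((R.Om t).G.deg n) := fun t =>
      Module.Finite.of_injective (((R.Om t).G.deg n).subtype.restrictScalars k)
        (Submodule.subtype_injective _)
    have hKinj := inj_of_chain k (fun t => (R.Om t).G.deg n) (fun t => (R.P t).G.deg n) hIinj
      (fun t => Grading.degMap _ _ (R.ι t) (R.grι t) n)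
      (fun t => Grading.degMap _ _ (R.π t) (R.grπ t) n)
      (fun t => Grading.degMap_inj _ _ _ _ _ (R.inj t))
      (fun t => Grading.degMap_surj _ _ _ _ _ (R.surj t))
      (fun t => Grading.degMap_exact _ _ _ _ _ _ _ _ (R.exa t)) C
      (fun t => le_trans (LinearMap.finrank_le_finrank_of_injective
        (f := ((R.Om t).G.deg n).subtype.restrictScalars k) (Submodule.subtype_injective _)) (hC t))
      ⟨fun x y => Subtype.ext (by
        obtain ⟨m, rfl⟩ : ∃ m, n = m + 1 := ⟨n - 1, by omega⟩
        rw [← Grading.deg_p _ _ x, ← Grading.deg_p _ _ y, hX, hX])⟩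
    rcases t with _ | t
    · obtain ⟨m, rfl⟩ : ∃ m, n = m + 1 := ⟨n - 1, by omega⟩
      exact hx (hX m x)
    · let p := Grading.degMap _ _ (R.π (t+1)) (R.grπ (t+1)) n
      let i := Grading.degMap _ _ (R.ι (t+1)) (R.grι (t+1)) n
      have hi : Function.Injective i := Grading.degMap_inj _ _ _ _ _ (R.inj (t+1))
      have hp : Function.Surjective p := Grading.degMap_surj _ _ _ _ _ (R.surj (t+1))
      have hip : LinearMap.range i = LinearMap.ker p :=
        Grading.degMap_exact _ _ _ _ _ _ _ _ (R.exa (t+1))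
      have := hKinj (t+2)
      obtain ⟨r, hr⟩ := inj_factor i LinearMap.id (by
        rw [LinearMap.ker_eq_bot.2 hi]; exact bot_le)
      obtain ⟨s, hs⟩ := surj_factor p hp (LinearMap.id - i ∘ₗ r) (by
        rw [← hip]
        rintro _ ⟨y, rfl⟩
        rw [LinearMap.mem_ker, LinearMap.sub_apply, LinearMap.comp_apply, hr]
        simp)
      have hps : ∀ y, p (s y) = y := by
        intro y
        obtain ⟨z, rfl⟩ := hp y
        have : p (i (r z)) = 0 := by
          rw [← LinearMap.mem_ker, ← hip]; exact ⟨_, rfl⟩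
        rw [hs, LinearMap.sub_apply, map_sub, LinearMap.comp_apply, this, sub_zero]
        rfl
      let f' : Infl A T ((R.Om (t+1)).G.deg n) →ₗ[T] (R.P t).M :=
        mkInfl (TS.res A (R.ι t) ∘ₗ ((R.Om (t+1)).G.deg n).subtype) (fun d x hd =>
          (R.P t).G.smul_deg n (hnP _ (by omega) t) d _ hd (by
            show (R.P t).G.p n (R.ι t x) = R.ι t x
            rw [← R.grι]; exact congrArg _ x.2))
      let w' : Infl A T ((R.Om (t+1)).G.deg n) →ₗ[T] (R.P (t+1)).M :=
        mkInfl (((R.P (t+1)).G.deg n).subtype ∘ₗ s) (fun d x hd =>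
          (R.P (t+1)).G.smul_deg n (hnP _ (by omega) (t+1)) d _ hd (s x).2)
      have hf' : Function.Injective f' := fun a b hab => by
        exact (Infl.of A T _).symm.injective (Subtype.ext (R.inj t hab))
      have := R.P_inj (t+1)
      obtain ⟨S, hS⟩ := inj_factor f' w' (by rw [LinearMap.ker_eq_bot.2 hf']; exact bot_le)
      let g := R.ι t ∘ₗ R.π (t+1) ∘ₗ S
      obtain ⟨m, hm⟩ := R.nil t g (fun x => R.πι t _)
      let y := (R.Om (t+1)).G.toDeg n x
      have hg : g (R.ι t y) = R.ι t y := by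
        have h1 : S (R.ι t y) = s y := hS (Infl.of A T _ y)
        show R.ι t (R.π (t+1) (S (R.ι t y))) = _
        rw [h1]
        exact congrArg (R.ι t) (congrArg Subtype.val (hps y))
      have hgm : ∀ m, (g ^ m) (R.ι t y) = R.ι t y := by
        intro m
        induction m with
        | zero => rfl
        | succ m ih => rw [pow_succ', Module.End.mul_apply, ih, hg]
      have h2 : R.ι t y = 0 := by rw [← hgm m, hm]
      refine hx (R.inj t ?_)
      rw [map_zero]
      exact h2
end

section concrete
variable (k A : Type) [Field k] [Ring A] [Algebra k A]

noncomputable instance : TS A (TrivialExtension k A) where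
  fst := (TrivSqZeroExt.fstHom ℕ A (Module.Dual k A)).toRingHom
  fst_one a := by
    show TrivSqZeroExt.fst (a • (1 : TrivialExtension k A)) = a
    simp
  st a s t := by
    refine TrivSqZeroExt.ext ?_ ?_
    · simp [mul_assoc]
    · simp only [TrivSqZeroExt.snd_mul, TrivSqZeroExt.snd_smul, TrivSqZeroExt.fst_smul, smul_add,
        smul_eq_mul, mul_smul]
      rw [smul_comm a (MulOpposite.op t.fst) s.snd]
  sq s t hs ht := by
    have hs : s.fst = 0 := hs
    have ht : t.fst = 0 := ht
    refine TrivSqZeroExt.ext ?_ ?_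
    · simp [hs]
    · simp [hs, ht]

theorem TE.fst_eq (t : TrivialExtension k A) : TS.fst (A := A) t = t.fst := rfl

theorem TE.lam (s t : TrivialExtension k A) : (s * t).snd 1 = t.snd s.fst + s.snd t.fst := by
  rw [TrivSqZeroExt.snd_mul, LinearMap.add_apply]
  congr 1
  · show t.snd (1 * s.fst) = _
    rw [one_mul]
  · show s.snd (t.fst * 1) = _
    rw [mul_one]

theorem TE.nondeg (u : TrivialExtension k A) (h : ∀ s : TrivialExtension k A, (s * u).snd 1 = 0) :
    u = 0 := by
  refine TrivSqZeroExt.ext ?_ (LinearMap.ext fun a => ?_)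
  · refine (Module.forall_dual_apply_eq_zero_iff k _).1 fun f => ?_
    have := h (TrivSqZeroExt.inr f)
    rw [TE.lam] at this
    simpa using this
  · have := h (TrivSqZeroExt.inl a)
    rw [TE.lam] at this
    simpa using this

theorem TE.faith (t : TrivialExtension k A)
    (h : ∀ d : TrivialExtension k A, TS.fst (A := A) d = 0 → d * t = 0) :
    TS.fst (A := A) t = 0 := by
  refine (Module.forall_dual_apply_eq_zero_iff k _).1 fun f => ?_
  have h1 := h (TrivSqZeroExt.inr f) (by rw [TE.fst_eq, TrivSqZeroExt.fst_inr])
  have h2 := TE.lam k A (TrivSqZeroExt.inr f) t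
  rw [h1] at h2
  rw [TE.fst_eq]
  simpa using h2.symm

variable [FiniteDimensional k A]

instance : FiniteDimensional k (TrivialExtension k A) := by
  let f : (A × Module.Dual k A) →ₗ[k] TrivialExtension k A :=
    { toFun := fun x => TrivSqZeroExt.inl x.1 + TrivSqZeroExt.inr x.2
      map_add' := fun x y => by refine TrivSqZeroExt.ext ?_ ?_ <;> simp
      map_smul' := fun c x => by refine TrivSqZeroExt.ext ?_ ?_ <;> simp }
  exact Module.Finite.of_surjective f (fun x => ⟨(x.fst, x.snd), by
        refine TrivSqZeroExt.ext ?_ ?_ <;> simp [f]⟩)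

theorem TE.repr (ψ : TrivialExtension k A →ₗ[k] k) :
    ∃ t0 : TrivialExtension k A, ∀ t, ψ t = (t * t0).snd 1 := by
  let ψ1 : Module.Dual k A :=
    { toFun := fun a => ψ (TrivSqZeroExt.inl a)
      map_add' := fun a b => by rw [TrivSqZeroExt.inl_add, map_add]
      map_smul' := fun c a => by
        rw [RingHom.id_apply, ← map_smul]
        congr 1
        refine TrivSqZeroExt.ext ?_ ?_ <;> simp }
  let ψ2 : Module.Dual k (Module.Dual k A) :=
    { toFun := fun f => ψ (TrivSqZeroExt.inr f)
      map_add' := fun a b => by rw [TrivSqZeroExt.inr_add, map_add]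
      map_smul' := fun c a => by
        rw [RingHom.id_apply, ← map_smul]
        congr 1
        refine TrivSqZeroExt.ext ?_ ?_ <;> simp }
  obtain ⟨b, hb⟩ := (Module.evalEquiv k A).surjective ψ2
  refine ⟨TrivSqZeroExt.inl b + TrivSqZeroExt.inr ψ1, fun t => ?_⟩
  rw [TE.lam]
  have h1 : t.snd b = ψ2 t.snd := by rw [← hb]; rfl
  simp only [TrivSqZeroExt.snd_add, TrivSqZeroExt.snd_inl, TrivSqZeroExt.snd_inr, zero_add,
    TrivSqZeroExt.fst_add, TrivSqZeroExt.fst_inl, TrivSqZeroExt.fst_inr, add_zero, h1]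
  show ψ t = ψ (TrivSqZeroExt.inl t.fst) + ψ (TrivSqZeroExt.inr t.snd)
  rw [← map_add, TrivSqZeroExt.inl_fst_add_inr_snd_eq]

instance TE.inj : Module.Injective (TrivialExtension k A) (TrivialExtension k A) := by
  refine Module.Baer.injective fun I g => ?_
  let lam : TrivialExtension k A →ₗ[k] k :=
    { toFun := fun t => t.snd 1
      map_add' := fun s t => by simp
      map_smul' := fun c t => by simp }
  obtain ⟨ψ, hψ⟩ := LinearMap.exists_extend (p := I.restrictScalars k)
    (lam ∘ₗ (g.restrictScalars k))
  obtain ⟨t0, ht0⟩ := TE.repr k A ψ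
  refine ⟨LinearMap.toSpanSingleton _ _ t0, fun x hx => ?_⟩
  rw [LinearMap.toSpanSingleton_apply, smul_eq_mul, ← sub_eq_zero]
  refine TE.nondeg k A _ fun s => ?_
  have h1 : ψ (s * x) = (s * g ⟨x, hx⟩).snd 1 := by
    have := LinearMap.congr_fun hψ ⟨s * x, I.mul_mem_left s hx⟩
    refine this.trans ?_
    show (g (s • ⟨x, hx⟩)).snd 1 = _
    rw [map_smul, smul_eq_mul]
  rw [mul_sub, ← mul_assoc, TrivSqZeroExt.snd_sub, LinearMap.sub_apply, ← ht0, h1, sub_self]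

end concrete

section inflk
variable {k A T X : Type} [Field k] [Ring A] [Ring T] [Algebra k A] [Algebra k T] [Module A T]
  [TS A T] [IsScalarTower k A T] [AddCommGroup X] [Module A X] [Module k X] [IsScalarTower k A X]

instance : Module k (Infl A T X) := inferInstanceAs (Module k X)
instance : IsScalarTower k A (Infl A T X) := inferInstanceAs (IsScalarTower k A X)
instance [FiniteDimensional k X] : FiniteDimensional k (Infl A T X) :=
  inferInstanceAs (FiniteDimensional k X)
instance : IsScalarTower k T (Infl A T X) := ⟨fun c t x => by
  have h : c • t = (c • (1:A)) • t := by rw [smul_assoc, one_smul]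
  rw [Infl.smul_def, Infl.smul_def, h, TS.fst_smul, smul_mul_assoc, one_mul, smul_assoc]⟩
end inflk

/-- the inflated module as a graded module -/
def inflGM (k A T X : Type) [Field k] [Ring A] [Ring T] [Algebra k A] [Algebra k T] [Module A T]
    [TS A T] [IsScalarTower k A T] [AddCommGroup X] [Module A X] [Module k X] [IsScalarTower k A X]
    [FiniteDimensional k X] : GM k A T where
  M := Infl A T X
  G := Grading.conc (fun d m hd => by rw [Infl.smul_def, hd, zero_smul])

theorem fin_pd {k A T : Type} [Field k] [Ring A] [Ring T] [Algebra k A] [Algebra k T] [Module A T]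
    [TS A T] [FiniteDimensional k T] [IsScalarTower k A T] [FiniteDimensional k A]
    [Module.Injective T T]
    (hf : ∀ t : T, (∀ d, TS.fst (A := A) d = 0 → d * t = 0) → TS.fst (A := A) t = 0)
    (h : ∀ (M : Type) [AddCommGroup M] [Module T M], Module.Finite T M → ComplexityLeOne k T M)
    (N : ℕ) :
    ∀ (X : Type) [AddCommGroup X] [Module A X] [Module k X] [IsScalarTower k A X]
      [FiniteDimensional k X], Module.finrank k X = N → ∃ n, PD A X n := by
  induction N using Nat.strong_induction_on with
  | _ N ih =>
  intro X _ _ _ _ _ hN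
  by_contra! hpd
  have hend : ∀ e : X →ₗ[A] X, (∀ x, e x = 0) ∨ Function.Injective e := by
    intro e
    by_contra! hcon
    obtain ⟨⟨x, hx⟩, hinj⟩ := hcon
    have hsum := LinearMap.finrank_range_add_finrank_ker (e.restrictScalars k)
    have h1 : 0 < Module.finrank k (LinearMap.range (e.restrictScalars k)) :=
      Module.finrank_pos_iff_exists_ne_zero.2 ⟨⟨e x, x, rfl⟩, fun h => hx (congrArg Subtype.val h)⟩
    have h2 : 0 < Module.finrank k (LinearMap.ker (e.restrictScalars k)) := by
      have h3 : LinearMap.ker e ≠ ⊥ := fun h => hinj (LinearMap.ker_eq_bot.1 h)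
      obtain ⟨y, hy, hy0⟩ := Submodule.exists_mem_ne_zero_of_ne_bot h3
      exact Module.finrank_pos_iff_exists_ne_zero.2 ⟨⟨y, hy⟩, fun h => hy0 (congrArg Subtype.val h)⟩
    have f1 : FiniteDimensional k (LinearMap.range e) :=
      inferInstanceAs (FiniteDimensional k (LinearMap.range (e.restrictScalars k)))
    have f2 : FiniteDimensional k (LinearMap.ker e) :=
      inferInstanceAs (FiniteDimensional k (LinearMap.ker (e.restrictScalars k)))
    have h4 : Module.finrank k (LinearMap.range e) ≤
      Module.finrank k (LinearMap.range (e.restrictScalars k)) := le_rfl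
    have h5 : Module.finrank k (LinearMap.ker e) ≤
      Module.finrank k (LinearMap.ker (e.restrictScalars k)) := le_rfl
    obtain ⟨a, ha⟩ := ih (Module.finrank k (LinearMap.range e)) (h4.trans_lt (by omega))
      (LinearMap.range e) rfl
    obtain ⟨b, hb⟩ := ih (Module.finrank k (LinearMap.ker e)) (h5.trans_lt (by omega))
      (LinearMap.ker e) rfl
    exact hpd (max a b) (PD.x2 (LinearMap.ker e).subtype e.rangeRestrict
      (Submodule.subtype_injective _) e.surjective_rangeRestrict
      (by rw [Submodule.range_subtype, LinearMap.ker_rangeRestrict])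
      (hb.mono (le_max_right _ _)) (ha.mono (le_max_left _ _)))
  obtain ⟨R, hR⟩ := exists_res (inflGM k A T X)
  have key : ∀ Y : GM k A T, Y = inflGM k A T X →
      (∀ e : Y.M →ₗ[T] Y.M, (∀ x, e x = 0) ∨ Function.Injective e) ∧
      (∀ j x, Y.G.p (j+1) x = 0) ∧ ∀ n, ¬ PD A (Y.G.deg 0) n := by
    rintro Y rfl
    refine ⟨fun e => ?_, fun j x => rfl, fun n hn => ?_⟩
    · have := hend ((Infl.of A T X).symm.toLinearMap ∘ₗ TS.res A
        (show Infl A T X →ₗ[T] Infl A T X from e) ∘ₗ (Infl.of A T X).toLinearMap)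
      exact this
    · refine hpd n (PD.retract (N := (inflGM k A T X).G.deg 0)
        (LinearMap.codRestrict _ (Infl.of A T X).toLinearMap (fun x => rfl))
        ((Infl.of A T X).symm.toLinearMap ∘ₗ ((inflGM k A T X).G.deg 0).subtype)
        (fun x => rfl) hn)
  obtain ⟨k1, k2, k3⟩ := key _ hR
  obtain ⟨C, hC⟩ := R.bounded' (h _ (Module.Finite.of_restrictScalars_finite k T _))
  exact R.contra hf k1 C hC k2 k3


theorem main_abs {k A T : Type} [Field k] [Ring A] [Ring T] [Algebra k A] [Algebra k T] [Module A T]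
    [TS A T] [FiniteDimensional k T] [IsScalarTower k A T] [FiniteDimensional k A]
    [Module.Injective T T]
    (hf : ∀ t : T, (∀ d, TS.fst (A := A) d = 0 → d * t = 0) → TS.fst (A := A) t = 0)
    (h : ∀ (M : Type) [AddCommGroup M] [Module T M], Module.Finite T M → ComplexityLeOne k T M)
    (X : Type) [AddCommGroup X] [Module A X] [Module.Finite A X] : ∃ n, PD A X n := by
  let _ : Module k X := Module.compHom X (algebraMap k A)
  have : IsScalarTower k A X := IsScalarTower.of_algebraMap_smul (fun r x => rfl)
  have : Module.Finite k X := Module.Finite.trans A X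
  exact fin_pd hf h _ X rfl

theorem main_aux (k A : Type) [Field k] [Ring A] [Algebra k A] [FiniteDimensional k A]
    (h : ∀ (M : Type) [AddCommGroup M] [Module (TrivialExtension k A) M],
      Module.Finite (TrivialExtension k A) M → ComplexityLeOne k (TrivialExtension k A) M) :
    HasFiniteGlobalDimension A := by
  have : IsArtinianRing A := IsArtinianRing.of_finite k A
  obtain ⟨n, hn⟩ := main_abs (T := TrivialExtension k A) (TE.faith k A) h (A ⧸ Ring.jacobson A)
  exact ⟨n, fun M _ _ => PD.projDimLE n M ((PD.all_of_jacobson hn M).mono (Nat.le_succ n))⟩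

section DualBimodule

variable (k A : Type) [Field k] [Ring A] [Algebra k A]

/-- Let `A` be a ring-indecomposable finite-dimensional `k`-algebra. If
every finitely generated module over the trivial extension algebra `T(A)` has complexity at
most one, then `A` has finite global dimension. -/
theorem finite_globalDimension_of_complexityLeOne
    [FiniteDimensional k A]
    (hind : ∀ e : A, e ∈ Subring.center A → e * e = e → e = 0 ∨ e = 1)
    (h : ∀ (M : Type) [AddCommGroup M] [Module (TrivialExtension k A) M],
      Module.Finite (TrivialExtension k A) M → ComplexityLeOne k (TrivialExtension k A) M) :
    HasFiniteGlobalDimension A := by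
  exact main_aux k A h

end DualBimodule
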